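/- Let P = ∏_{1≤j<k≤15} (1 + t_j + t_k) in 𝔽₂[t₁,…,t₁₅], and let P₃₂ denote the homogeneous component of P of degree 32. Then P₃₂ is congruent to e₄e₁₄² + e₆e₁₃² + e₈e₁₂² + e₁₀²e₁₂ + e₁₀e₁₁² + e₄²e₁₁e₁₃ + e₆²e₇e₁₃ + e₆²e₁₀² + e₇³e₁₁ + e₈⁴ + e₄⁸ modulo the ideal generated by e₁, e₂, e₃, e₅, e₉ and the element e₄e₁₃ + e₆e₁₁ + e₇e₁₀. -/

import Mathlib

open MvPolynomial Finset

/-- The `i`-th elementary symmetric polynomial in `𝔽₂[t₁,…,t₁₅]`. -/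
noncomputable def e (i : ℕ) : MvPolynomial (Fin 15) (ZMod 2) :=
  esymm (Fin 15) (ZMod 2) i

/-- `P = ∏_{1≤j<k≤15} (1 + t_j + t_k)` in `𝔽₂[t₁,…,t₁₅]`. -/
noncomputable def P : MvPolynomial (Fin 15) (ZMod 2) :=
  ∏ p ∈ univ.filter (fun p : Fin 15 × Fin 15 => p.1 < p.2), (1 + X p.1 + X p.2)

/-! ### Truncated polynomial arithmetic over `𝔽₂` -/

/-- A polynomial: a list of pairs (weight, monomial code).  The code is a product of primes, one
prime for each variable. -/
def Pol : Type := List (ℕ × ℕ)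

/-- Merge, knowing how to merge with the tail of the first list. -/
def mergeAux (x : ℕ × ℕ) (xs : List (ℕ × ℕ)) (f : List (ℕ × ℕ) → List (ℕ × ℕ)) :
    List (ℕ × ℕ) → List (ℕ × ℕ)
  | [] => x :: xs
  | y :: ys =>
    match Nat.beq x.2 y.2 with
    | true => match Nat.beq x.1 y.1 with
      | true => f ys
      | false => x :: y :: f ys
    | false => match Nat.ble x.2 y.2 with
      | true => x :: f (y :: ys)
      | false => y :: mergeAux x xs f ys

/-- Sum of two sorted lists of monomials, with cancellation. -/
def mergeP : List (ℕ × ℕ) → List (ℕ × ℕ) → List (ℕ × ℕ)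
  | [] => fun ys => ys
  | x :: xs => mergeAux x xs (mergeP xs)

/-- Product of a polynomial with a monomial, truncated in weights above 32. -/
def scaleP (x : ℕ × ℕ) : List (ℕ × ℕ) → List (ℕ × ℕ)
  | [] => []
  | y :: ys =>
    match Nat.ble (Nat.add x.1 y.1) 32 with
    | true => (Nat.add x.1 y.1, Nat.mul x.2 y.2) :: scaleP x ys
    | false => scaleP x ys

/-- Truncated product. -/
def mulP : List (ℕ × ℕ) → List (ℕ × ℕ) → List (ℕ × ℕ)
  | [] => fun _ => []
  | x :: xs => fun b => mergeP (scaleP x b) (mulP xs b)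

instance : Add Pol := ⟨mergeP⟩
instance : Mul Pol := ⟨mulP⟩

/-- Boolean equality of polynomials. -/
def eqb : List (ℕ × ℕ) → List (ℕ × ℕ) → Bool
  | [], [] => true
  | x :: xs, y :: ys =>
    match Nat.beq x.1 y.1 with
    | true => match Nat.beq x.2 y.2 with
      | true => eqb xs ys
      | false => false
    | false => false
  | _, _ => false

theorem eqb_sound : ∀ a b : List (ℕ × ℕ), eqb a b = true → a = b
  | [], [], _ => rfl
  | x :: xs, y :: ys, h => by
    obtain ⟨x1, x2⟩ := x
    obtain ⟨y1, y2⟩ := y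
    simp only [eqb] at h
    split at h
    · rename_i h1
      split at h
      · rename_i h2
        rw [Nat.eq_of_beq_eq_true h1, Nat.eq_of_beq_eq_true h2, eqb_sound xs ys h]
      · exact absurd h (by simp)
    · exact absurd h (by simp)
  | [], _ :: _, h => by simp [eqb] at h
  | _ :: _, [], h => by simp [eqb] at h

theorem eq_of_eqb (a b : Pol) (h : eqb a b = true) : a = b := eqb_sound a b h

/-- Quadruples, standing for cubic polynomials in an auxiliary variable `w`. -/
structure V4 (α : Type*) where
  x0 : α
  x1 : α
  x2 : α
  x3 : α

theorem eqV_of_eqb (a b : V4 Pol)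
    (h : (eqb a.x0 b.x0 && (eqb a.x1 b.x1 && (eqb a.x2 b.x2 && eqb a.x3 b.x3))) = true) :
    a = b := by
  obtain ⟨a0, a1, a2, a3⟩ := a
  obtain ⟨b0, b1, b2, b3⟩ := b
  simp only [Bool.and_eq_true] at h
  obtain ⟨h0, h1, h2, h3⟩ := h
  rw [eq_of_eqb _ _ h0, eq_of_eqb _ _ h1, eq_of_eqb _ _ h2, eq_of_eqb _ _ h3]

section generic
variable {α : Type*} [Add α] [Mul α]

/-- Multiplication by `w` modulo `w⁴ = p₁w³ + p₂w² + p₄`. -/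
def sh (p1 p2 p4 : α) (r : V4 α) : V4 α :=
  ⟨r.x3 * p4, r.x0, r.x1 + r.x3 * p2, r.x2 + r.x3 * p1⟩

/-- Adding a constant. -/
def addc (r : V4 α) (g : α) : V4 α := ⟨r.x0 + g, r.x1, r.x2, r.x3⟩

/-- The 4×4 determinant (in characteristic two). -/
def det4 (r s t u : V4 α) : α :=
  (r.x0 * s.x1 + r.x1 * s.x0) * (t.x2 * u.x3 + t.x3 * u.x2)
  + (r.x0 * s.x2 + r.x2 * s.x0) * (t.x1 * u.x3 + t.x3 * u.x1)
  + (r.x0 * s.x3 + r.x3 * s.x0) * (t.x1 * u.x2 + t.x2 * u.x1)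
  + (r.x1 * s.x2 + r.x2 * s.x1) * (t.x0 * u.x3 + t.x3 * u.x0)
  + (r.x1 * s.x3 + r.x3 * s.x1) * (t.x0 * u.x2 + t.x2 * u.x0)
  + (r.x2 * s.x3 + r.x3 * s.x2) * (t.x0 * u.x1 + t.x1 * u.x0)

/-- The norm of the cubic `r(w)`. -/
def nrm (p1 p2 p4 : α) (r : V4 α) : α :=
  det4 r (sh p1 p2 p4 r) (sh p1 p2 p4 (sh p1 p2 p4 r))
    (sh p1 p2 p4 (sh p1 p2 p4 (sh p1 p2 p4 r)))

/-- The polynomial `∑ aᵢ c₀ⁱ w^(7-i)` reduced modulo the quartic, with powers of `c₀` supplied. -/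
def red (p1 p2 p4 k1 k2 k3 k4 k5 k7 a0 a1 a2 a3 a4 a5 : α) : V4 α :=
  addc (sh p1 p2 p4 (sh p1 p2 p4 (addc (sh p1 p2 p4 (addc (sh p1 p2 p4
    ⟨a3 * k3, a2 * k2, a1 * k1, a0⟩) (a4 * k4))) (a5 * k5)))) k7

end generic


def Lc0 : Pol := [(0, 1), (15, 2), (14, 3), (13, 5), (12, 7), (11, 11), (10, 13), (8, 17), (7, 19), (6, 23), (4, 29)]

def Lc1 : Pol := [(13, 5), (11, 11), (7, 19)]

def Lc2 : Pol := [(11, 11), (10, 13), (7, 19), (6, 23)]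

def Lc4 : Pol := [(7, 19), (6, 23), (4, 29)]

def La0 : Pol := [(15, 2)]

def La1 : Pol := [(0, 1), (13, 5), (12, 7), (11, 11), (10, 13), (8, 17), (7, 19), (6, 23), (4, 29)]

def La2 : Pol := [(11, 11), (7, 19)]

def La3 : Pol := [(0, 1), (8, 17), (4, 29)]

def La4 : Pol := [(7, 19)]

def La5 : Pol := [(4, 29)]

def Lp2 : Pol := [(11, 11), (10, 13), (7, 19), (26, 22), (6, 23), (25, 26), (25, 33), (22, 38), (24, 39), (21, 46), (24, 55), (21, 57), (23, 65), (20, 69), (23, 77), (22, 91), (20, 95), (19, 115), (22, 121), (19, 133), (18, 161), (20, 169), (19, 187), (18, 221), (15, 319), (15, 323), (14, 361), (14, 377), (14, 391), (12, 529), (11, 551), (10, 667)]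

def Lp4 : Pol := [(7, 19), (6, 23), (4, 29), (22, 38), (21, 46), (21, 57), (19, 58), (20, 69), (18, 87), (20, 95), (19, 115), (19, 133), (17, 145), (18, 161), (16, 203), (18, 209), (17, 247), (17, 253), (32, 261), (16, 299), (15, 319), (15, 323), (14, 361), (14, 377), (14, 391), (12, 493), (12, 529), (32, 575), (30, 725), (8, 841), (31, 931), (30, 1127), (28, 1421), (29, 2299), (28, 2783), (27, 3211), (26, 3509), (26, 3887), (24, 4901), (23, 5491), (22, 6647), (21, 6859), (20, 8303), (20, 8381), (19, 10051), (18, 10469), (18, 12167), (16, 15341), (15, 15979), (14, 19343), (12, 24389), (31, 30682), (32, 31407), (30, 31958), (32, 36501), (29, 38686), (32, 41209), (30, 46023), (29, 47937), (27, 48778), (32, 50255), (31, 52345), (28, 58029), (32, 58121), (32, 58667), (31, 60835), (31, 70357), (26, 73167), (30, 73283), (32, 75449), (29, 76705), (28, 79895), (32, 83317), (30, 85169), (32, 86411), (31, 89167), (32, 89401), (31, 91333), (31, 92191), (31, 93347), (27, 96715), (30, 101761), (30, 104329), (28, 107387), (30, 107939), (30, 108953), (30, 110561), (27, 111853), (30,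 112999), (29, 115159), (29, 116603), (25, 121945), (28, 130321), (29, 130663), (29, 133837), (26, 135401), (28, 136097), (28, 141151), (28, 142129), (28, 142477), (28, 152881), (28, 158171), (27, 168751), (24, 170723), (27, 170867), (26, 175769), (26, 177973), (26, 199433), (26, 206839), (25, 207727), (25, 212773), (24, 243049), (24, 251459), (24, 260797), (23, 268279), (23, 271643), (24, 279841), (22, 317057), (22, 328831), (20, 414613), (16, 707281)]

def Lc02 : Pol := [(0, 1), (30, 4), (28, 9), (26, 25), (24, 49), (22, 121), (20, 169), (16, 289), (14, 361), (12, 529), (8, 841)]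

def Lc03 : Pol := [(0, 1), (15, 2), (14, 3), (30, 4), (13, 5), (12, 7), (28, 9), (11, 11), (10, 13), (8, 17), (7, 19), (6, 23), (26, 25), (4, 29), (24, 49), (22, 121), (20, 169), (32, 261), (16, 289), (14, 361), (12, 529), (32, 575), (31, 578), (29, 722), (30, 725), (32, 833), (8, 841), (30, 867), (31, 931), (27, 1058), (28, 1083), (30, 1127), (32, 1183), (28, 1421), (29, 1445), (32, 1573), (26, 1587), (23, 1682), (27, 1805), (31, 1859), (28, 2023), (30, 2057), (30, 2197), (29, 2299), (22, 2523), (26, 2527), (25, 2645), (28, 2783), (28, 2873), (27, 3179), (27, 3211), (26, 3509), (24, 3703), (26, 3757), (26, 3887), (25, 3971), (21, 4205), (24, 4693), (24, 4901), (24, 4913), (23, 5491), (23, 5819), (20, 5887), (22, 6137), (22, 6647), (21, 6859), (22, 6877), (20, 8303), (20, 8381), (20, 8993), (19, 9251), (19, 10051), (18, 10469), (18, 10933), (18, 12167), (16, 14297), (16, 15341), (15, 15979), (14, 19343), (12, 24389)]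

def Lc04 : Pol := [(0, 1), (32, 83521), (28, 130321), (24, 279841), (16, 707281)]

def Lc05 : Pol := [(0, 1), (15, 2), (14, 3), (13, 5), (12, 7), (11, 11), (10, 13), (8, 17), (7, 19), (6, 23), (4, 29), (32, 83521), (28, 130321), (24, 279841), (16, 707281), (31, 1414562), (30, 2121843), (29, 3536405), (32, 3779309), (32, 4757297), (28, 4950967), (31, 5316979), (30, 6436343), (27, 7780091), (28, 8115389), (26, 9194653), (24, 12023777), (23, 13438339), (22, 16267463), (20, 20511149)]

def Lc07 : Pol := [(0, 1), (15, 2), (14, 3), (30, 4), (13, 5), (12, 7), (28, 9), (11, 11), (10, 13), (8, 17), (7, 19), (6, 23), (26, 25), (4, 29), (24, 49), (22, 121), (20, 169), (32, 261), (16, 289), (14, 361), (12, 529), (32, 575), (31, 578), (29, 722), (30, 725), (32, 833), (8, 841), (30, 867), (31, 931), (27, 1058), (28, 1083), (30, 1127), (32, 1183), (28, 1421), (29, 1445), (32, 1573), (26, 1587), (23, 1682), (27, 1805), (31, 1859), (28, 2023), (30, 2057), (30, 2197), (29, 2299), (22, 2523), (26, 2527), (25, 2645), (28, 2783), (28, 2873),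 (27, 3179), (27, 3211), (26, 3509), (24, 3703), (26, 3757), (26, 3887), (25, 3971), (21, 4205), (24, 4693), (24, 4901), (24, 4913), (23, 5491), (23, 5819), (20, 5887), (22, 6137), (22, 6647), (21, 6859), (22, 6877), (20, 8303), (20, 8381), (20, 8993), (19, 9251), (19, 10051), (18, 10469), (18, 10933), (18, 12167), (16, 14297), (16, 15341), (15, 15979), (14, 19343), (12, 24389), (32, 83521), (28, 130321), (24, 279841), (16, 707281), (31, 1414562), (30, 2121843), (29, 3536405), (32, 3779309), (32, 4757297), (28, 4950967), (31, 5316979), (30, 6436343), (27, 7780091), (28, 8115389), (26, 9194653), (24, 12023777), (23, 13438339), (22, 16267463), (20, 20511149), (32, 204404209), (32, 235346281), (30, 255328441), (28, 374151649), (24, 594823321), (32, 10111996457), (32, 10850397821), (31, 11301643099), (30, 13680936383), (28, 17249876309)]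

def Lc08 : Pol := [(0, 1), (32, 500246412961)]

def Lc011 : Pol := [(0, 1), (15, 2), (14, 3), (30, 4), (13, 5), (12, 7), (28, 9), (11, 11), (10, 13), (8, 17), (7, 19), (6, 23), (26, 25), (4, 29), (24, 49), (22, 121), (20, 169), (32, 261), (16, 289), (14, 361), (12, 529), (32, 575), (31, 578), (29, 722), (30, 725), (32, 833), (8, 841), (30, 867), (31, 931), (27, 1058), (28, 1083), (30, 1127), (32, 1183), (28, 1421), (29, 1445), (32, 1573), (26, 1587), (23, 1682), (27, 1805), (31, 1859), (28, 2023), (30, 2057), (30, 2197), (29, 2299), (22, 2523), (26, 2527), (25, 2645), (28, 2783), (28, 2873), (27, 3179), (27, 3211), (26, 3509), (24, 3703), (26, 3757), (26, 3887), (25, 3971), (21, 4205), (24, 4693), (24, 4901), (24, 4913), (23, 5491), (23, 5819), (20, 5887), (22, 6137), (22, 6647), (21, 6859), (22, 6877), (20, 8303), (20, 8381), (20, 8993), (19, 9251), (19, 10051), (18, 10469), (18, 10933), (18, 12167), (16, 14297), (16, 15341), (15, 15979), (14, 19343), (12, 24389), (32, 500246412961)]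

theorem chk1 : Lc0 * Lc0 = Lc02 := eq_of_eqb _ _ (by decide +kernel)

theorem chk2 : Lc02 * Lc0 = Lc03 := eq_of_eqb _ _ (by decide +kernel)

theorem chk3 : Lc02 * Lc02 = Lc04 := eq_of_eqb _ _ (by decide +kernel)

theorem chk4 : Lc04 * Lc0 = Lc05 := eq_of_eqb _ _ (by decide +kernel)

theorem chk5 : Lc05 * Lc02 = Lc07 := eq_of_eqb _ _ (by decide +kernel)

theorem chk6 : Lc04 * Lc04 = Lc08 := eq_of_eqb _ _ (by decide +kernel)

theorem chk7 : Lc08 * Lc03 = Lc011 := eq_of_eqb _ _ (by decide +kernel)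

theorem chk8 : Lc0 * Lc2 = Lp2 := eq_of_eqb _ _ (by decide +kernel)

theorem chk9 : Lc03 * Lc4 = Lp4 := eq_of_eqb _ _ (by decide +kernel)

theorem chk10 : Lc08 * Lc08 = [(0, 1)] := eq_of_eqb _ _ (by decide +kernel)

def Lr0 : V4 Pol :=
  ⟨[(0, 1), (15, 2), (14, 3), (30, 4), (13, 5), (12, 7), (28, 9), (11, 11), (10, 13), (7, 19), (6, 23), (26, 25), (23, 34), (24, 49), (22, 51), (19, 58), (21, 85), (18, 87), (20, 119), (22, 121), (17, 145), (20, 169), (19, 187), (16, 203), (18, 221), (15, 319), (15, 323), (14, 361), (14, 377), (14, 391), (12, 529), (11, 551), (32, 575), (31, 578), (10, 667), (29, 722), (30, 867), (31, 931), (27, 1058), (28, 1083), (30, 1127), (32, 1183), (29, 1445), (32, 1573), (26, 1587), (23, 1682), (27, 1805), (31, 1859), (28, 2023), (30, 2197), (29, 2299), (22, 2523), (26, 2527), (25, 2645), (28, 2783), (27, 3179), (27, 3211), (24, 3703), (26, 3757), (26, 3887), (25, 3971), (21, 4205), (24, 4693), (23, 5491), (23, 5819), (20, 5887), (22, 6647),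 (21, 6859), (22, 6877), (20, 8303), (19, 9251), (19, 10051), (18, 10933), (18, 12167), (15, 15979), (14, 19343), (31, 28594), (31, 30682), (32, 31407), (32, 41209), (30, 42891), (30, 46023), (27, 48778), (31, 52345), (32, 58667), (32, 62951), (29, 71485), (26, 73167), (30, 73283), (29, 76705), (32, 79781), (32, 80707), (32, 83521), (31, 92191), (31, 93119), (31, 93347), (31, 98923), (28, 100079), (30, 101761), (30, 104329), (28, 107387), (30, 108953), (30, 112723), (30, 112999), (29, 115159), (29, 116603), (30, 116909), (25, 121945), (28, 136097), (28, 141151), (28, 142129), (28, 152881), (27, 157267), (27, 159239), (27, 168751), (24, 170723), (27, 170867), (26, 185861), (26, 192763), (25, 198911), (26, 199433), (26, 206839), (24, 240787), (23, 268279), (23, 271643), (23, 291479), (22, 303601), (22, 317057), (22, 328831), (22, 352843), (20, 444889), (19, 463391), (18, 560947), (16, 707281)],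
  [(11, 11), (7, 19), (31, 931), (31, 1859), (29, 2299), (27, 3179), (27, 3211), (25, 3971), (23, 5491), (23, 5819), (21, 6859), (19, 9251), (19, 10051), (15, 15979)],
  [(0, 1), (15, 2), (14, 3), (28, 10), (27, 14), (27, 15), (26, 21), (26, 22), (26, 25), (25, 26), (25, 33), (23, 34), (22, 38), (24, 39), (21, 46), (24, 49), (22, 51), (21, 57), (19, 58), (20, 69), (18, 87), (22, 121), (20, 169), (16, 289), (14, 361), (12, 529), (8, 841)],
  [(15, 2)]⟩

theorem chk11 : V4.mk (La3 * Lc03) (La2 * Lc02) (La1 * Lc0) La0 = Lr0 := eqV_of_eqb _ _ (by decide +kernel)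

def Lr1 : V4 Pol :=
  ⟨[(7, 19), (22, 38), (21, 46), (19, 58), (32, 290), (31, 406), (32, 494), (32, 506), (31, 598), (30, 638), (30, 646), (29, 722), (29, 754), (29, 782), (27, 986), (27, 1058), (23, 1682), (31, 30682), (30, 31958), (29, 38686), (27, 48778), (31, 1414562), (31, 5316979), (23, 13438339)],
  [(0, 1), (15, 2), (14, 3), (30, 4), (13, 5), (12, 7), (28, 9), (11, 11), (10, 13), (7, 19), (6, 23), (26, 25), (23, 34), (24, 49), (22, 51), (19, 58), (21, 85), (18, 87), (20, 119), (22, 121), (17, 145), (20, 169), (19, 187), (16, 203), (18, 221), (15, 319), (15, 323), (14, 361), (14, 377), (14, 391), (12, 529), (11, 551), (32, 575), (31, 578), (10, 667), (29, 722), (30, 867), (31, 931), (27, 1058), (28, 1083), (30, 1127), (32, 1183), (29, 1445), (32, 1573), (26, 1587), (23, 1682), (27, 1805), (31, 1859), (28, 2023), (30, 2197), (29, 2299), (22, 2523), (26, 2527), (25, 2645), (28, 2783), (27, 3179), (27, 3211), (24, 3703), (26, 3757), (26, 3887), (25, 3971), (21, 4205), (24, 4693), (23, 5491), (23, 5819),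 (20, 5887), (22, 6647), (21, 6859), (22, 6877), (20, 8303), (19, 9251), (19, 10051), (18, 10933), (18, 12167), (15, 15979), (14, 19343), (31, 28594), (31, 30682), (32, 31407), (32, 41209), (30, 42891), (30, 46023), (27, 48778), (31, 52345), (32, 58667), (32, 62951), (29, 71485), (26, 73167), (30, 73283), (29, 76705), (32, 79781), (32, 80707), (32, 83521), (31, 92191), (31, 93119), (31, 93347), (31, 98923), (28, 100079), (30, 101761), (30, 104329), (28, 107387), (30, 108953), (30, 112723), (30, 112999), (29, 115159), (29, 116603), (30, 116909), (25, 121945), (28, 136097), (28, 141151), (28, 142129), (28, 152881), (27, 157267), (27, 159239), (27, 168751), (24, 170723), (27, 170867), (26, 185861), (26, 192763), (25, 198911), (26, 199433), (26, 206839), (24, 240787), (23, 268279), (23, 271643), (23, 291479), (22, 303601), (22, 317057), (22, 328831), (22, 352843), (20, 444889), (19, 463391), (18, 560947), (16, 707281)],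
  [(11, 11), (7, 19), (26, 22), (25, 26), (22, 38), (21, 46), (30, 638), (30, 646), (29, 722), (29, 754), (29, 782), (31, 931), (27, 1058), (26, 1102), (25, 1334), (31, 1859), (29, 2299), (27, 3179), (27, 3211), (25, 3971), (23, 5491), (23, 5819), (21, 6859), (19, 9251), (19, 10051), (15, 15979)],
  [(0, 1), (15, 2), (14, 3), (27, 14), (27, 15), (26, 21), (26, 25), (25, 26), (25, 33), (23, 34), (24, 39), (21, 46), (24, 49), (22, 51), (21, 57), (19, 58), (20, 69), (18, 87), (22, 121), (20, 169), (16, 289), (14, 361), (12, 529), (8, 841)]⟩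

theorem chk12 : addc (sh Lc1 Lp2 Lp4 Lr0) (La4 * Lc04) = Lr1 := eqV_of_eqb _ _ (by decide +kernel)

def Lr2 : V4 Pol :=
  ⟨[(7, 19), (6, 23), (19, 58), (18, 87), (20, 95), (19, 115), (19, 133), (18, 161), (18, 209), (17, 247), (17, 253), (32, 290), (16, 299), (15, 323), (14, 361), (14, 391), (32, 506), (12, 529), (11, 551), (30, 638), (10, 667), (29, 722), (28, 874), (26, 1102), (30, 31958), (31, 5316979), (30, 6436343), (23, 13438339), (22, 16267463), (32, 211477019), (31, 228451763), (30, 255328441), (30, 276546871), (28, 374151649), (27, 389711831), (26, 471756427)],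
  [(7, 19), (22, 38), (21, 46), (19, 58), (32, 290), (31, 406), (32, 494), (32, 506), (31, 598), (30, 638), (30, 646), (29, 722), (29, 754), (29, 782), (27, 986), (27, 1058), (23, 1682), (31, 30682), (30, 31958), (29, 38686), (27, 48778), (31, 1414562), (31, 5316979), (23, 13438339)],
  [(0, 1), (15, 2), (14, 3), (30, 4), (13, 5), (12, 7), (28, 9), (26, 25), (23, 34), (24, 49), (22, 51), (24, 55), (19, 58), (23, 65), (23, 77), (21, 85), (18, 87), (22, 91), (20, 95), (19, 115), (20, 119), (19, 133), (17, 145), (18, 161), (16, 203), (32, 494), (32, 506), (31, 578), (30, 867), (28, 874), (27, 1058), (28, 1083), (32, 1183), (29, 1445), (26, 1587), (23, 1682), (27, 1805), (28, 2023), (22, 2523), (26, 2527), (25, 2645), (24, 3703), (21, 4205), (20, 5887), (32, 25346), (31, 28594), (31, 30682), (32, 31407), (32, 41209), (30, 42891), (30, 46023), (32, 46255), (27, 48778), (32, 50255), (31, 52345), (31, 54665), (32, 58121), (32, 58667), (31, 60835), (32, 62951), (31, 64757), (31, 70357), (29, 71485), (26, 73167), (30, 73283), (30, 76531), (29, 76705),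 (28, 79895), (32, 83521), (30, 85169), (27, 96715), (28, 100079), (28, 107387), (27, 111853), (25, 121945), (28, 130321), (26, 135401), (24, 170723), (24, 279841), (16, 707281)],
  [(13, 5), (28, 10), (27, 15), (25, 26), (25, 33), (21, 46), (21, 57), (32, 290), (31, 435), (32, 494), (32, 506), (29, 722), (31, 741), (29, 754), (31, 759), (29, 782), (28, 874), (29, 957), (29, 969), (27, 1058), (28, 1083), (27, 1311), (25, 1334), (29, 1445), (25, 1653), (27, 1805), (25, 2645), (21, 4205)]⟩

theorem chk13 : addc (sh Lc1 Lp2 Lp4 Lr1) (La5 * Lc05) = Lr2 := eqV_of_eqb _ _ (by decide +kernel)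

def Lr3 : V4 Pol :=
  ⟨[(20, 95), (19, 115), (17, 145), (32, 494), (32, 575), (31, 598), (32, 627), (32, 665), (30, 725), (29, 754), (31, 759), (31, 805), (28, 874), (29, 957), (29, 1015), (31, 1045), (27, 1058), (28, 1083), (30, 1235), (30, 1265), (27, 1311), (25, 1334), (29, 1495), (28, 1595), (28, 1615), (25, 1653), (27, 1805), (27, 1885), (27, 1955), (25, 2465), (25, 2645), (21, 4205)],
  [(7, 19), (6, 23), (19, 58), (18, 87), (20, 95), (19, 115), (19, 133), (18, 161), (18, 209), (17, 247), (17, 253), (32, 290), (16, 299), (15, 323), (14, 361), (14, 391), (32, 506), (12, 529), (11, 551), (30, 638), (10, 667), (29, 722), (28, 874), (26, 1102), (30, 31958), (31, 5316979), (30, 6436343), (23, 13438339), (22, 16267463), (32, 211477019), (31, 228451763), (30, 255328441), (30, 276546871), (28, 374151649), (27, 389711831), (26, 471756427)],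
  [(7, 19), (22, 38), (21, 46), (24, 55), (19, 58), (23, 65), (20, 95), (19, 115), (32, 290), (31, 406), (32, 575), (31, 598), (30, 638), (30, 646), (32, 665), (29, 722), (31, 741), (29, 754), (31, 759), (29, 782), (31, 805), (28, 874), (32, 935), (27, 986), (28, 1083), (31, 1105), (27, 1311), (28, 1595), (28, 1615), (23, 1682), (27, 1805), (27, 1885), (27, 1955), (25, 2645), (24, 2755), (23, 3335), (31, 30682), (30, 31958), (29, 38686), (32, 46255), (27, 48778), (32, 50255), (31, 54665), (31, 60835), (28, 79895), (27, 96715), (31, 1414562), (32, 2316955), (31, 2804735), (31, 5316979), (23, 13438339)],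
  [(0, 1), (15, 2), (14, 3), (30, 4), (13, 5), (12, 7), (28, 9), (23, 34), (24, 49), (22, 51), (19, 58), (23, 65), (23, 77), (21, 85), (18, 87), (22, 91), (19, 115), (20, 119), (19, 133), (17, 145), (18, 161), (16, 203), (31, 578), (30, 867), (27, 1058), (32, 1183), (29, 1445), (26, 1587), (23, 1682), (27, 1805), (28, 2023), (22, 2523), (26, 2527), (25, 2645), (24, 3703), (21, 4205), (20, 5887), (31, 28594), (31, 30682), (32, 41209), (30, 42891), (30, 46023), (27, 48778), (31, 52345), (31, 54665), (32, 58121), (32, 58667), (31, 60835), (32, 62951), (31, 64757), (31, 70357), (29, 71485), (26, 73167), (30, 73283), (30, 76531), (29, 76705), (32, 83521), (30, 85169), (27, 96715), (28, 100079), (28, 107387), (27, 111853), (25, 121945), (28, 130321), (26, 135401), (24, 170723), (24, 279841), (16, 707281)]⟩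

theorem chk14 : sh Lc1 Lp2 Lp4 Lr2 = Lr3 := eqV_of_eqb _ _ (by decide +kernel)

def Lr4 : V4 Pol :=
  ⟨[(0, 1), (15, 2), (14, 3), (30, 4), (13, 5), (12, 7), (28, 9), (11, 11), (10, 13), (8, 17), (26, 25), (24, 49), (22, 121), (20, 169), (18, 209), (17, 247), (17, 253), (16, 289), (16, 299), (15, 319), (15, 323), (14, 377), (14, 391), (12, 493), (32, 494), (32, 506), (32, 575), (31, 578), (31, 598), (32, 627), (30, 638), (30, 725), (31, 741), (29, 754), (31, 759), (32, 833), (30, 867), (30, 897), (29, 957), (31, 1045), (26, 1102), (28, 1131), (32, 1183), (30, 1265), (25, 1334), (29, 1445), (32, 1573), (28, 1595), (25, 1653), (23, 1682), (31, 1859), (24, 2001), (28, 2023), (30, 2057), (26, 2185), (30, 2197), (22, 2523), (26, 2527), (25, 2645), (24, 2755), (28, 2873), (27, 3179), (24, 3703), (26, 3757), (25, 3971), (21, 4205), (24, 4693), (24, 4913), (23, 5819), (20, 5887), (22, 6137), (22, 6877), (20, 8993), (19, 9251), (18, 10933), (16, 14297), (32, 31407), (30, 31958), (32, 32799), (32,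 34017), (32, 36501), (29, 38686), (32, 41209), (32, 46255), (32, 46835), (29, 47937), (32, 50255), (28, 58029), (32, 75449), (28, 79895), (32, 83317), (32, 83521), (32, 86411), (31, 89167), (32, 89401), (31, 91333), (31, 92191), (31, 93347), (30, 101761), (30, 104329), (30, 107939), (30, 108953), (30, 110561), (30, 112999), (29, 115159), (29, 116603), (29, 130663), (29, 133837), (28, 136097), (28, 141151), (28, 142129), (28, 142477), (28, 152881), (28, 158171), (27, 168751), (27, 170867), (26, 175769), (26, 177973), (26, 199433), (26, 206839), (25, 207727), (25, 212773), (24, 243049), (24, 251459), (24, 260797), (23, 268279), (23, 271643), (22, 317057), (22, 328831), (20, 414613), (31, 1414562), (30, 2121843), (29, 3536405), (32, 4757297), (28, 4950967), (27, 7780091), (26, 9194653), (24, 12023777), (32, 204404209), (32, 211477019), (31, 225622639), (31, 228451763), (30, 266644937), (30, 276546871), (28, 348689533), (32, 10111996457), (32, 500246412961)],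
  [(20, 95), (19, 115), (17, 145), (32, 494), (32, 575), (31, 598), (32, 627), (32, 665), (30, 725), (29, 754), (31, 759), (31, 805), (28, 874), (29, 957), (29, 1015), (31, 1045), (27, 1058), (28, 1083), (30, 1235), (30, 1265), (27, 1311), (25, 1334), (29, 1495), (28, 1595), (28, 1615), (25, 1653), (27, 1805), (27, 1885), (27, 1955), (25, 2465), (25, 2645), (21, 4205)],
  [(11, 11), (10, 13), (19, 58), (18, 87), (20, 95), (19, 115), (22, 121), (19, 133), (18, 161), (20, 169), (19, 187), (18, 209), (18, 221), (17, 247), (17, 253), (32, 290), (16, 299), (15, 319), (14, 377), (32, 506), (32, 575), (30, 638), (28, 874), (27, 1058), (28, 1083), (26, 1102), (30, 1235), (30, 1265), (26, 1587), (27, 1805), (26, 2185), (31, 30682), (32, 31407), (30, 31958), (32, 36501), (30, 46023), (32, 50255), (31, 52345), (30, 63365), (27, 7780091), (26, 9194653), (32, 211477019), (31, 225622639), (30, 266644937)],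
  [(13, 5), (28, 10), (11, 11), (27, 15), (26, 22), (26, 25), (25, 33), (25, 35), (21, 46), (21, 57), (19, 58), (23, 65), (23, 77), (19, 115), (19, 133), (31, 406), (31, 435), (31, 598), (29, 722), (30, 725), (31, 741), (29, 754), (31, 759), (29, 782), (28, 874), (31, 931), (29, 957), (29, 969), (27, 986), (29, 1015), (28, 1083), (26, 1102), (31, 1105), (30, 1235), (30, 1265), (31, 1309), (27, 1311), (25, 1653), (23, 1682), (29, 1729), (29, 1771), (27, 1805), (27, 1885), (27, 1955), (26, 2185), (27, 2233), (27, 2261), (26, 2527), (25, 2645), (25, 3059), (23, 3335), (23, 3857), (31, 30682), (29, 38686), (29, 47937), (27, 48778), (31, 54665), (31, 60835), (31, 64757), (31, 70357), (27, 96715), (27, 111853), (31, 1414562), (31, 2804735), (31, 3243737), (29, 3536405), (27, 7780091)]⟩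

theorem chk15 : addc (sh Lc1 Lp2 Lp4 Lr3) (Lc07) = Lr4 := eqV_of_eqb _ _ (by decide +kernel)

def Ls1 : V4 Pol :=
  ⟨[(20, 95), (19, 115), (17, 145), (18, 209), (17, 253), (15, 319), (28, 874), (27, 1058), (28, 1083), (26, 1102), (27, 1311), (28, 1615), (25, 1653), (23, 1682), (27, 1805), (27, 1955), (26, 2185), (29, 2299), (25, 2465), (26, 2527), (28, 2717), (28, 2783), (25, 3059), (27, 3289), (23, 3335), (26, 3509), (26, 3553), (23, 3857), (25, 3971), (25, 4147), (21, 4205), (25, 4301), (23, 5423), (23, 5819), (19, 9251), (31, 30682), (32, 50255), (31, 60835), (32, 75449), (29, 76705), (28, 79895), (31, 91333), (31, 92191), (27, 96715), (30, 110561), (29, 115159), (25, 121945), (29, 133837), (27, 168751), (26, 175769), (25, 212773), (23, 268279), (31, 1414562), (31, 2804735), (31, 3243737), (29, 3536405), (31, 4560743), (27, 7780091), (31, 225622639)],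
  [(0, 1), (15, 2), (14, 3), (30, 4), (13, 5), (12, 7), (28, 9), (11, 11), (10, 13), (8, 17), (26, 25), (24, 49), (22, 121), (20, 169), (18, 209), (17, 247), (17, 253), (16, 289), (16, 299), (15, 319), (15, 323), (14, 377), (14, 391), (12, 493), (32, 494), (32, 506), (32, 575), (31, 578), (31, 598), (32, 627), (30, 638), (30, 725), (31, 741), (29, 754), (31, 759), (32, 833), (30, 867), (30, 897), (29, 957), (31, 1045), (26, 1102), (28, 1131), (32, 1183), (30, 1265), (25, 1334), (29, 1445), (32, 1573), (28, 1595), (25, 1653), (23, 1682), (31, 1859), (24, 2001), (28, 2023), (30, 2057), (26, 2185), (30, 2197), (22, 2523), (26, 2527), (25, 2645), (24, 2755), (28, 2873), (27, 3179), (24, 3703), (26, 3757), (25, 3971), (21, 4205), (24, 4693), (24, 4913), (23, 5819), (20, 5887), (22, 6137), (22, 6877), (20, 8993), (19, 9251), (18, 10933), (16, 14297), (32, 31407), (30, 31958), (32, 32799), (32, 34017), (32, 36501), (29, 38686), (32, 41209), (32, 46255), (32, 46835), (29, 47937), (32, 50255), (28, 58029), (32, 75449), (28, 79895), (32, 83317),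 (32, 83521), (32, 86411), (31, 89167), (32, 89401), (31, 91333), (31, 92191), (31, 93347), (30, 101761), (30, 104329), (30, 107939), (30, 108953), (30, 110561), (30, 112999), (29, 115159), (29, 116603), (29, 130663), (29, 133837), (28, 136097), (28, 141151), (28, 142129), (28, 142477), (28, 152881), (28, 158171), (27, 168751), (27, 170867), (26, 175769), (26, 177973), (26, 199433), (26, 206839), (25, 207727), (25, 212773), (24, 243049), (24, 251459), (24, 260797), (23, 268279), (23, 271643), (22, 317057), (22, 328831), (20, 414613), (31, 1414562), (30, 2121843), (29, 3536405), (32, 4757297), (28, 4950967), (27, 7780091), (26, 9194653), (24, 12023777), (32, 204404209), (32, 211477019), (31, 225622639), (31, 228451763), (30, 266644937), (30, 276546871), (28, 348689533), (32, 10111996457), (32, 500246412961)],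
  [(24, 55), (23, 65), (22, 121), (21, 143), (17, 145), (18, 209), (17, 253), (32, 494), (32, 506), (32, 575), (30, 638), (32, 665), (30, 725), (31, 741), (31, 759), (31, 805), (32, 935), (29, 957), (29, 1015), (26, 1102), (31, 1105), (30, 1265), (30, 1463), (29, 1495), (25, 1653), (29, 1729), (31, 1859), (30, 2057), (26, 2185), (29, 2431), (25, 2465), (26, 2527), (25, 2645), (24, 2755), (25, 3059), (23, 3335), (26, 3509), (26, 3553), (25, 3971), (25, 4147), (21, 4205), (25, 4301), (23, 5819), (22, 6061), (21, 7337)],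
  [(11, 11), (10, 13), (26, 25), (19, 58), (18, 87), (19, 115), (19, 133), (18, 161), (20, 169), (19, 187), (18, 221), (17, 247), (17, 253), (16, 299), (15, 319), (14, 377), (27, 1058), (26, 1587), (27, 1805), (26, 2527), (31, 30682), (32, 36501), (30, 46023), (31, 52345), (32, 58121), (30, 73283), (27, 7780091), (26, 9194653), (32, 211477019), (31, 225622639), (30, 266644937)]⟩

theorem chk16 : sh Lc1 Lp2 Lp4 Lr4 = Ls1 := eqV_of_eqb _ _ (by decide +kernel)

def Ls2 : V4 Pol :=
  ⟨[(18, 209), (17, 247), (17, 253), (16, 299), (15, 319), (14, 377), (32, 494), (32, 506), (32, 575), (31, 598), (32, 627), (30, 638), (30, 725), (31, 741), (29, 754), (31, 759), (30, 897), (29, 957), (31, 1045), (26, 1102), (28, 1131), (30, 1235), (30, 1265), (25, 1334), (30, 1463), (29, 1495), (28, 1595), (25, 1653), (23, 1682), (29, 1729), (29, 1771), (27, 1885), (24, 2001), (28, 2093), (26, 2185), (27, 2233), (29, 2299), (22, 2523), (26, 2527), (26, 2639), (25, 2645), (28, 2783), (23, 3335), (26, 3509), (24, 3703), (23, 3857),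 (25, 3971), (22, 4669), (24, 4807), (22, 6061), (31, 28594), (32, 31407), (32, 34017), (32, 36501), (30, 42891), (32, 46255), (27, 48778), (31, 52345), (31, 54665), (31, 56695), (32, 60697), (31, 60835), (32, 62951), (31, 64757), (31, 65569), (31, 70357), (26, 73167), (30, 73283), (32, 75449), (30, 76531), (32, 78793), (30, 79373), (32, 81719), (30, 85169), (27, 96715), (30, 101761), (30, 103037), (30, 110561), (27, 111853), (26, 135401), (26, 175769), (31, 1414562), (32, 1682841), (30, 2121843), (31, 2804735), (32, 3114223), (31, 3243737), (30, 3926629), (32, 4042687), (30, 5097301)],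
  [(20, 95), (19, 115), (17, 145), (18, 209), (17, 253), (15, 319), (28, 874), (27, 1058), (28, 1083), (26, 1102), (27, 1311), (28, 1615), (25, 1653), (23, 1682), (27, 1805), (27, 1955), (26, 2185), (29, 2299), (25, 2465), (26, 2527), (28, 2717), (28, 2783), (25, 3059), (27, 3289), (23, 3335), (26, 3509), (26, 3553), (23, 3857), (25, 3971), (25, 4147), (21, 4205), (25, 4301), (23, 5423), (23, 5819), (19, 9251), (31, 30682), (32, 50255), (31, 60835), (32, 75449), (29, 76705), (28, 79895), (31, 91333), (31, 92191), (27, 96715), (30, 110561), (29, 115159), (25, 121945), (29, 133837), (27, 168751), (26, 175769), (25, 212773), (23, 268279), (31, 1414562), (31, 2804735), (31, 3243737), (29, 3536405), (31, 4560743), (27, 7780091), (31, 225622639)],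
  [(0, 1), (15, 2), (14, 3), (30, 4), (13, 5), (12, 7), (28, 9), (11, 11), (10, 13), (8, 17), (26, 25), (24, 49), (16, 289), (15, 319), (15, 323), (14, 377), (14, 391), (12, 493), (31, 578), (30, 725), (32, 833), (30, 867), (30, 1235), (30, 1265), (29, 1445), (28, 1595), (23, 1682), (31, 1859), (28, 2023), (30, 2057), (30, 2197), (22, 2523), (28, 2717), (24, 2755), (28, 2783), (28, 2873), (27, 3179), (26, 3757), (21, 4205), (24, 4693), (24, 4807), (24, 4913), (23, 5819), (20, 5887), (22, 6137), (22, 6877), (20, 8993), (19, 9251), (18, 10933), (16, 14297), (31, 30682), (32, 41209), (30, 46023), (32, 46255), (32, 46835), (32, 50255), (31, 60835), (32, 62951), (30, 63365), (31, 70357), (30, 73283), (32, 75449), (29, 76705), (32, 78793), (28, 79895), (32, 80707), (32, 81719), (32, 83317), (32, 83521), (30, 85169), (31, 92191), (31, 93347), (30, 104329), (28, 107387), (30, 108953), (30, 110561), (30, 112999), (29, 116603), (28, 136097), (28, 139403), (28, 141151), (28, 142477), (28, 152881), (27, 168751), (27, 170867), (26, 177973), (26, 199433), (26, 206839), (24,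 243049), (24, 260797), (23, 268279), (23, 271643), (22, 317057), (22, 328831), (20, 414613), (31, 1414562), (30, 2121843), (29, 3536405), (32, 4757297), (28, 4950967), (27, 7780091), (26, 9194653), (24, 12023777), (32, 204404209), (31, 225622639), (31, 228451763), (30, 266644937), (30, 276546871), (28, 348689533), (32, 10111996457), (32, 500246412961)],
  [(17, 145), (17, 247), (17, 253), (32, 290), (31, 435), (32, 494), (32, 506), (30, 725), (31, 741), (31, 759), (29, 1015), (30, 1235), (30, 1265), (28, 1595), (29, 1729), (29, 1771), (27, 1885), (25, 2465), (25, 2645), (28, 2717), (24, 2755), (28, 2783), (27, 3211), (27, 3289), (23, 3335), (25, 3971), (25, 4199), (21, 4205), (25, 4301), (24, 4693), (24, 4807), (23, 5681), (23, 5819), (21, 7163), (21, 7337)]⟩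

theorem chk17 : sh Lc1 Lp2 Lp4 Ls1 = Ls2 := eqV_of_eqb _ _ (by decide +kernel)

def Ls3 : V4 Pol :=
  ⟨[(24, 2755), (23, 3335), (21, 4205), (24, 4693), (24, 4807), (23, 5681), (23, 5819), (21, 7163), (21, 7337), (32, 50255), (31, 60835), (32, 75449), (29, 76705), (31, 91333), (29, 115159)],
  [(18, 209), (17, 247), (17, 253), (16, 299), (15, 319), (14, 377), (32, 494), (32, 506), (32, 575), (31, 598), (32, 627), (30, 638), (30, 725), (31, 741), (29, 754), (31, 759), (30, 897), (29, 957), (31, 1045), (26, 1102), (28, 1131), (30, 1235), (30, 1265), (25, 1334), (30, 1463), (29, 1495), (28, 1595), (25, 1653), (23, 1682), (29, 1729), (29, 1771), (27, 1885), (24, 2001), (28, 2093), (26, 2185), (27, 2233), (29, 2299), (22, 2523), (26, 2527), (26, 2639), (25, 2645), (28, 2783), (23, 3335), (26, 3509), (24, 3703), (23, 3857), (25, 3971), (22, 4669), (24, 4807), (22, 6061), (31, 28594), (32, 31407), (32, 34017), (32, 36501), (30, 42891), (32, 46255), (27, 48778), (31, 52345), (31, 54665), (31, 56695), (32, 60697),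 (31, 60835), (32, 62951), (31, 64757), (31, 65569), (31, 70357), (26, 73167), (30, 73283), (32, 75449), (30, 76531), (32, 78793), (30, 79373), (32, 81719), (30, 85169), (27, 96715), (30, 101761), (30, 103037), (30, 110561), (27, 111853), (26, 135401), (26, 175769), (31, 1414562), (32, 1682841), (30, 2121843), (31, 2804735), (32, 3114223), (31, 3243737), (30, 3926629), (32, 4042687), (30, 5097301)],
  [(20, 95), (19, 115), (17, 145), (18, 209), (17, 253), (15, 319), (28, 874), (27, 1058), (28, 1083), (26, 1102), (27, 1311), (28, 1595), (28, 1615), (25, 1653), (23, 1682), (27, 1805), (27, 1885), (27, 1955), (26, 2185), (29, 2299), (25, 2465), (26, 2527), (24, 2755), (25, 3059), (27, 3211), (26, 3509), (26, 3553), (23, 3857), (25, 3971), (25, 4147), (21, 4205), (25, 4301), (24, 4693), (24, 4807), (23, 5423), (23, 5681), (19, 9251), (31, 30682), (29, 76705), (28, 79895), (31, 92191), (27, 96715), (30, 110561), (29, 115159), (25, 121945), (29, 133837), (27, 168751), (26, 175769), (25, 212773), (23, 268279), (31, 1414562), (32, 2316955), (31, 3243737), (29, 3536405), (32, 3946813),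 (32, 4042687), (31, 4560743), (31, 4777721), (31, 4893779), (27, 7780091), (31, 225622639)],
  [(0, 1), (15, 2), (14, 3), (30, 4), (13, 5), (12, 7), (28, 9), (11, 11), (10, 13), (8, 17), (26, 25), (24, 49), (16, 289), (15, 319), (15, 323), (14, 377), (14, 391), (12, 493), (31, 578), (32, 833), (30, 867), (29, 1445), (23, 1682), (31, 1859), (28, 2023), (30, 2057), (30, 2197), (22, 2523), (28, 2873), (27, 3179), (26, 3757), (21, 4205), (24, 4913), (23, 5819), (20, 5887), (22, 6137), (22, 6877), (20, 8993), (19, 9251), (18, 10933), (16, 14297), (31, 30682), (32, 41209), (30, 46023), (31, 52345), (31, 60835), (32, 62951), (31, 70357), (30, 73283), (29, 76705), (32, 79781), (32, 83317), (32, 83521), (30, 85169), (31, 89167), (31, 91333), (31, 92191), (31, 93347), (30, 104329), (28, 107387), (30, 107939), (30, 108953), (30, 112999), (29, 116603), (28, 141151), (28, 142477), (28, 152881), (27, 168751), (27, 170867), (26, 177973), (26, 199433), (26, 206839), (24, 243049), (24, 260797), (23, 268279), (23, 271643), (22, 317057), (22, 328831), (20, 414613), (31, 1414562), (30, 2121843),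 (29, 3536405), (32, 4757297), (28, 4950967), (27, 7780091), (26, 9194653), (24, 12023777), (32, 204404209), (31, 225622639), (31, 228451763), (30, 266644937), (30, 276546871), (28, 348689533), (32, 10111996457), (32, 500246412961)]⟩

theorem chk18 : sh Lc1 Lp2 Lp4 Ls2 = Ls3 := eqV_of_eqb _ _ (by decide +kernel)

def Lm01 : Pol := [(0, 1), (30, 4), (28, 9), (26, 25), (24, 49), (22, 121), (20, 169), (16, 289), (32, 46255), (32, 83521), (32, 89401), (30, 101761), (30, 104329), (28, 142129), (28, 152881), (24, 243049), (32, 204404209)]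

def Ln23 : Pol := [(0, 1), (30, 4), (28, 9), (26, 25), (24, 49), (22, 121), (20, 169), (16, 289), (30, 725), (30, 1235), (30, 1265), (28, 1595), (28, 2717), (24, 2755), (28, 2783), (24, 4693), (24, 4807), (32, 50255), (31, 52345), (30, 63365), (32, 75449), (28, 79895), (32, 83521), (31, 89167), (31, 91333), (30, 101761), (30, 104329), (30, 107939), (30, 110561), (28, 136097), (28, 139403), (28, 142129), (28, 152881), (24, 243049), (32, 204404209)]

theorem chk19 : Lr4.x0 * Ls1.x1 + Lr4.x1 * Ls1.x0 = Lm01 := eq_of_eqb _ _ (by decide +kernel)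

theorem chk20 : Ls2.x2 * Ls3.x3 + Ls2.x3 * Ls3.x2 = Ln23 := eq_of_eqb _ _ (by decide +kernel)

def Lm02 : Pol := [(24, 55), (23, 65), (22, 121), (21, 143), (17, 145), (18, 209), (17, 253), (32, 290), (31, 435), (32, 494), (32, 575), (32, 627), (30, 638), (32, 665), (31, 741), (31, 805), (29, 957), (26, 1102), (30, 1235), (30, 1265), (25, 1653), (29, 1729), (29, 1771), (26, 2185), (26, 2527), (25, 2645), (24, 2755), (25, 3059), (23, 3335), (25, 3971), (21, 4205), (23, 5819), (22, 6061), (21, 7337)]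

def Ln13 : Pol := [(20, 95), (19, 115), (17, 145), (18, 209), (17, 253), (32, 290), (15, 319), (31, 435), (32, 506), (32, 575), (32, 627), (30, 638), (32, 665), (30, 725), (31, 759), (31, 805), (28, 874), (29, 957), (29, 1015), (27, 1058), (28, 1083), (26, 1102), (30, 1235), (27, 1311), (30, 1463), (29, 1495), (25, 1653), (23, 1682), (29, 1771), (27, 1805), (27, 1885), (26, 2185), (27, 2233), (26, 2527), (25, 3059), (23, 3335), (23, 3857), (25, 3971), (21, 4205), (23, 5819), (19, 9251), (31, 28594), (31, 30682), (32, 50255), (31, 54665), (31, 56695), (31, 60835), (31, 64757), (31, 65569), (32, 75449), (29, 76705), (28, 79895), (31, 91333), (31, 92191), (31, 93119), (27, 96715), (30, 110561), (29, 115159), (25, 121945), (29, 133837), (27, 168751), (26, 175769), (25, 212773), (23, 268279), (31, 1414562), (31, 2804735), (31, 3243737), (29, 3536405), (27, 7780091), (31, 225622639)]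

theorem chk21 : Lr4.x0 * Ls1.x2 + Lr4.x2 * Ls1.x0 = Lm02 := eq_of_eqb _ _ (by decide +kernel)

theorem chk22 : Ls2.x1 * Ls3.x3 + Ls2.x3 * Ls3.x1 = Ln13 := eq_of_eqb _ _ (by decide +kernel)

def Lm03 : Pol := [(11, 11), (10, 13), (26, 22), (26, 25), (25, 26), (25, 33), (24, 39), (24, 55), (19, 58), (23, 65), (23, 77), (18, 87), (22, 91), (19, 115), (22, 121), (19, 133), (18, 161), (17, 247), (17, 253), (32, 261), (32, 290), (16, 299), (15, 319), (14, 377), (31, 406), (31, 435), (32, 483), (32, 494), (32, 506), (31, 598), (30, 609), (32, 663), (32, 665), (30, 725), (31, 741), (31, 759), (30, 897), (31, 931), (32, 935), (27, 986), (27, 1058), (31, 1105), (30, 1127), (32, 1183), (30, 1235), (31, 1309), (30, 1463), (26, 1479), (30, 1547), (32, 1573), (26, 1587), (28, 1595), (27, 1805), (27, 1885), (27, 1955), (30, 2057), (27, 2233), (27, 2261), (26, 2527), (26, 2639), (28, 2717), (26, 2737), (28, 2783), (26, 3509), (26, 3553), (31, 28594), (31, 30682), (32, 34017), (32, 36501),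 (30, 42891), (30, 46023), (32, 46255), (31, 52345), (31, 54665), (31, 56695), (32, 58121), (32, 60697), (32, 62951), (31, 64757), (31, 65569), (30, 73283), (30, 76531), (32, 78793), (30, 79373), (32, 81719), (30, 101761), (30, 103037), (27, 7780091), (26, 9194653), (32, 211477019), (31, 225622639), (30, 266644937)]

def Ln12 : Pol := [(18, 209), (17, 247), (17, 253), (16, 299), (15, 319), (14, 377), (32, 575), (30, 725), (26, 1102), (25, 1334), (25, 1653), (23, 1682), (24, 2001), (26, 2185), (22, 2523), (26, 2527), (25, 2645), (27, 3211), (23, 3335), (26, 3553), (24, 3703), (23, 3857), (26, 3887), (25, 3971), (25, 4199), (25, 4301), (22, 4669), (24, 4807), (24, 4901), (24, 5083), (23, 5423), (22, 6061), (22, 6409), (32, 31407), (32, 32799), (32, 36501), (32, 46255), (27, 48778), (31, 52345), (31, 54665), (31, 60835), (31, 64757), (31, 70357), (26, 73167), (30, 73283), (32, 75449), (30, 76531), (32, 79781), (32, 80707), (30, 85169), (32, 86411), (31, 92191), (31, 93119), (27, 96715), (31, 98923), (30, 101761), (30, 108953), (30, 110561), (27, 111853), (30, 112723), (30, 116909),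 (26, 135401), (28, 142129), (27, 157267), (26, 175769), (26, 185861), (31, 1414562), (32, 1682841), (30, 2121843), (31, 2804735), (32, 3114223), (31, 3243737), (30, 3926629), (32, 4042687), (32, 4121741), (32, 4274803), (31, 4560743), (30, 5097301), (30, 5389969)]

theorem chk23 : Lr4.x0 * Ls1.x3 + Lr4.x3 * Ls1.x0 = Lm03 := eq_of_eqb _ _ (by decide +kernel)

theorem chk24 : Ls2.x1 * Ls3.x2 + Ls2.x2 * Ls3.x1 = Ln12 := eq_of_eqb _ _ (by decide +kernel)

def Lm12 : Pol := [(11, 11), (10, 13), (26, 22), (25, 26), (25, 33), (24, 39), (24, 55), (19, 58), (23, 65), (23, 77), (18, 87), (22, 91), (20, 95), (19, 115), (19, 133), (18, 161), (18, 209), (17, 247), (17, 253), (32, 261), (16, 299), (15, 319), (14, 377), (31, 406), (31, 435), (32, 483), (32, 494), (31, 598), (30, 609), (32, 627), (30, 638), (32, 663), (31, 741), (31, 759), (28, 874), (30, 897), (31, 931), (32, 935), (27, 986), (27, 1058), (28, 1083), (26, 1102), (31, 1105), (30, 1127), (32, 1183), (30, 1235), (30, 1265), (31, 1309), (26, 1479),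 (30, 1547), (26, 1587), (28, 1595), (28, 1615), (27, 1805), (27, 1885), (27, 1955), (26, 2185), (27, 2233), (27, 2261), (26, 2639), (26, 2737), (31, 28594), (31, 30682), (32, 31407), (30, 31958), (32, 34017), (32, 36501), (30, 42891), (30, 46023), (32, 46255), (32, 46835), (32, 50255), (31, 52345), (31, 54665), (31, 56695), (32, 60697), (32, 62951), (30, 63365), (31, 64757), (31, 65569), (30, 76531), (30, 79373), (27, 7780091), (26, 9194653), (32, 211477019), (31, 225622639), (30, 266644937)]

def Ln03 : Pol := [(18, 209), (17, 247), (17, 253), (16, 299), (15, 319), (14, 377), (32, 575), (30, 725), (26, 1102), (25, 1334), (25, 1653), (23, 1682), (24, 2001), (26, 2185), (22, 2523), (26, 2527), (25, 2645), (27, 3211), (23, 3335), (26, 3553), (24, 3703), (23, 3857), (26, 3887), (25, 3971), (25, 4199), (25, 4301), (22, 4669), (24, 4807), (24, 4901), (24, 5083), (23, 5423), (22, 6061), (22, 6409), (32, 31407), (32, 32799), (32, 36501), (32, 46255), (27, 48778), (31, 52345), (31, 54665), (31, 60835), (31, 64757), (31, 70357), (26, 73167), (30, 73283), (32, 75449),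 (30, 76531), (32, 79781), (32, 80707), (30, 85169), (32, 86411), (31, 92191), (31, 93119), (27, 96715), (31, 98923), (30, 108953), (30, 110561), (27, 111853), (30, 112723), (30, 116909), (26, 135401), (28, 142129), (27, 157267), (26, 175769), (26, 185861), (31, 1414562), (32, 1682841), (30, 2121843), (31, 2804735), (32, 3114223), (31, 3243737), (30, 3926629), (32, 4042687), (32, 4121741), (32, 4274803), (31, 4560743), (30, 5097301), (30, 5389969)]

theorem chk25 : Lr4.x1 * Ls1.x2 + Lr4.x2 * Ls1.x1 = Lm12 := eq_of_eqb _ _ (by decide +kernel)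

theorem chk26 : Ls2.x0 * Ls3.x3 + Ls2.x3 * Ls3.x0 = Ln03 := eq_of_eqb _ _ (by decide +kernel)

def Lm13 : Pol := [(13, 5), (11, 11), (21, 46), (21, 57), (19, 58), (21, 85), (19, 115), (22, 121), (19, 133), (21, 143), (19, 187), (32, 290), (31, 435), (32, 506), (32, 575), (32, 627), (30, 638), (32, 665), (29, 722), (30, 725), (31, 759), (31, 805), (28, 874), (29, 957), (29, 1015), (28, 1083), (26, 1102), (30, 1235), (27, 1311), (29, 1445), (30, 1463), (29, 1495), (28, 1615), (25, 1653), (23, 1682), (29, 1771), (27, 1805), (31, 1859), (27, 1885), (27, 1955), (26, 2185), (27, 2233), (29, 2299), (25, 2465), (26, 2527), (25, 2645), (28, 2717), (28, 2783), (25, 3059), (27, 3179), (27, 3289), (23, 3335), (26, 3509), (26, 3553), (23, 3857), (25, 4147), (25, 4301), (23, 5423), (31, 30682), (29, 38686), (29, 47937), (27, 48778), (31, 60835), (31, 70357), (29, 71485), (27, 96715), (31, 98923), (30, 101761), (27, 111853), (29, 120263), (27, 157267), (31, 1414562), (31, 2804735), (31, 3243737), (29, 3536405), (31, 4560743), (27,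 7780091)]

def Ln02 : Pol := [(24, 2755), (23, 3335), (21, 4205), (24, 4693), (24, 4807), (23, 5681), (23, 5819), (21, 7163), (21, 7337), (32, 46835), (32, 50255), (31, 56695), (31, 60835), (29, 71485), (32, 75449), (29, 76705), (32, 78793), (32, 79781), (32, 80707), (32, 81719), (31, 91333), (31, 93119), (31, 95381), (31, 96577), (31, 98923), (30, 101761), (29, 115159), (29, 120263), (29, 121771), (29, 124729)]

theorem chk27 : Lr4.x1 * Ls1.x3 + Lr4.x3 * Ls1.x1 = Lm13 := eq_of_eqb _ _ (by decide +kernel)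

theorem chk28 : Ls2.x0 * Ls3.x2 + Ls2.x2 * Ls3.x0 = Ln02 := eq_of_eqb _ _ (by decide +kernel)

def Lm23 : Pol := [(22, 121), (20, 169), (30, 725), (30, 1235), (30, 1265), (28, 1595), (28, 2717), (28, 2783), (32, 46255), (32, 78793), (32, 80707), (32, 89401), (30, 101761), (28, 142129)]

def Ln01 : Pol := [(32, 89401), (30, 101761), (28, 142129)]

theorem chk29 : Lr4.x2 * Ls1.x3 + Lr4.x3 * Ls1.x2 = Lm23 := eq_of_eqb _ _ (by decide +kernel)

theorem chk30 : Ls2.x0 * Ls3.x1 + Ls2.x1 * Ls3.x0 = Ln01 := eq_of_eqb _ _ (by decide +kernel)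

def LD : Pol := [(0, 1), (30, 725), (30, 1235), (30, 1265), (28, 1595), (28, 2717), (24, 2755), (28, 2783), (24, 4693), (24, 4807), (32, 46255), (32, 50255), (31, 52345), (30, 63365), (32, 75449), (28, 79895), (32, 83521), (31, 89167), (32, 89401), (31, 91333), (30, 107939), (30, 110561), (28, 136097), (28, 139403)]

theorem chk31 : Lm01 * Ln23 + Lm02 * Ln13 + Lm03 * Ln12 + Lm12 * Ln03 + Lm13 * Ln02 + Lm23 * Ln01 = LD := eq_of_eqb _ _ (by decide +kernel)

def Llow : Pol := [(0, 1), (15, 2), (14, 3), (30, 4), (13, 5), (12, 7), (28, 9), (11, 11), (10, 13), (8, 17), (7, 19), (6, 23), (26, 25), (4, 29), (24, 49), (22, 121), (20, 169), (16, 289), (14, 361), (12, 529), (31, 578), (29, 722), (8, 841), (30, 867), (31, 931), (27, 1058), (28, 1083), (30, 1127), (30, 1235), (30, 1265), (28, 1421), (29, 1445), (26, 1587), (28, 1595), (23, 1682), (27, 1805), (31, 1859), (28, 2023), (30, 2057), (30, 2197), (29, 2299), (22, 2523), (26, 2527), (25, 2645), (28, 2717), (24, 2755), (28, 2873), (27,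 3179), (27, 3211), (26, 3509), (24, 3703), (26, 3757), (26, 3887), (25, 3971), (21, 4205), (24, 4807), (24, 4901), (24, 4913), (23, 5491), (23, 5819), (20, 5887), (22, 6137), (22, 6647), (21, 6859), (22, 6877), (20, 8303), (20, 8381), (20, 8993), (19, 9251), (19, 10051), (18, 10469), (18, 10933), (18, 12167), (16, 14297), (16, 15341), (15, 15979), (14, 19343), (12, 24389)]

def Ly4 : Pol := [(4, 29)]

def Ly6 : Pol := [(6, 23)]

def Ly7 : Pol := [(7, 19)]

def Ly8 : Pol := [(8, 17)]

def Ly10 : Pol := [(10, 13)]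

def Ly11 : Pol := [(11, 11)]

def Ly12 : Pol := [(12, 7)]

def Ly13 : Pol := [(13, 5)]

def Ly14 : Pol := [(14, 3)]

def Ly15 : Pol := [(15, 2)]

def Ltgt : Pol :=
  Ly4 * (Ly14 * Ly14) + Ly6 * (Ly13 * Ly13) + Ly8 * (Ly12 * Ly12) + Ly10 * Ly10 * Ly12
    + Ly10 * (Ly11 * Ly11) + Ly4 * Ly4 * Ly11 * Ly13 + Ly6 * Ly6 * Ly7 * Ly13
    + Ly6 * Ly6 * (Ly10 * Ly10) + Ly7 * Ly7 * Ly7 * Ly11 + Ly8 * Ly8 * Ly8 * Ly8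
    + Ly4 * Ly4 * Ly4 * Ly4 * Ly4 * Ly4 * Ly4 * Ly4

theorem chk32 : LD * Lc011 = Llow + (Ltgt + (Ly7 * Ly8 + Ly4 * Ly11) * (Ly4 * Ly13 + Ly6 * Ly11 + Ly7 * Ly10)) := eq_of_eqb _ _ (by decide +kernel)

/-! ### The norm of a cubic modulo a quartic as a determinant -/

/-- General version of `sh`, with a coefficient `p₃`. -/
def shg {α : Type*} [Add α] [Mul α] (p1 p2 p3 p4 : α) (r : V4 α) : V4 α :=
  ⟨r.x3 * p4, r.x0 + r.x3 * p3, r.x1 + r.x3 * p2, r.x2 + r.x3 * p1⟩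

/-- The matrix with given rows. -/
def rowsM {α : Type*} (r s t u : V4 α) : Matrix (Fin 4) (Fin 4) α :=
  !![r.x0, r.x1, r.x2, r.x3; s.x0, s.x1, s.x2, s.x3; t.x0, t.x1, t.x2, t.x3;
     u.x0, u.x1, u.x2, u.x3]

theorem det_rowsM {R : Type*} [CommRing R] [CharP R 2] (r s t u : V4 R) :
    (rowsM r s t u).det = det4 r s t u := by
  simp only [rowsM, det4, Matrix.det_succ_row_zero, Fin.sum_univ_succ]
  simp [Fin.succAbove, CharTwo.neg_eq]
  ring

/-- Newton basis. -/
def newtL {R : Type*} [CommRing R] (a b c : R) : Matrix (Fin 4) (Fin 4) R :=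
  !![1, 0, 0, 0; -a, 1, 0, 0; a * b, -(a + b), 1, 0;
     -(a * b * c), a * b + a * c + b * c, -(a + b + c), 1]

/-- Divided differences. -/
def newtN {R : Type*} [CommRing R] (a b c : R) : Matrix (Fin 4) (Fin 4) R :=
  !![1, 0, 0, 0; a, 1, 0, 0; a ^ 2, a + b, 1, 0;
     a ^ 3, a ^ 2 + a * b + b ^ 2, a + b + c, 1]

theorem det_newtL {R : Type*} [CommRing R] (a b c : R) : (newtL a b c).det = 1 := by
  rw [newtL, Matrix.det_succ_row_zero]
  simp [Fin.sum_univ_succ, Matrix.det_fin_three]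

theorem det_newtN {R : Type*} [CommRing R] (a b c : R) : (newtN a b c).det = 1 := by
  rw [newtN, Matrix.det_succ_row_zero]
  simp [Fin.sum_univ_succ, Matrix.det_fin_three]

/-- Evaluation of a cubic. -/
def V4.eval {R : Type*} [CommRing R] (r : V4 R) (w : R) : R :=
  r.x0 + r.x1 * w + r.x2 * w ^ 2 + r.x3 * w ^ 3

theorem det_norm {R : Type*} [CommRing R] (r : V4 R) (a b c d : R) (S : V4 R → V4 R)
    (hS : S = shg (a + b + c + d) (-(a * b + a * c + a * d + b * c + b * d + c * d))
      (a * b * c + a * b * d + a * c * d + b * c * d) (-(a * b * c * d))) :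
    (rowsM r (S r) (S (S r)) (S (S (S r)))).det =
      r.eval a * r.eval b * r.eval c * r.eval d := by
  have key : (newtL a b c * rowsM r (S r) (S (S r)) (S (S (S r))) * newtN a b c).det =
      r.eval a * r.eval b * r.eval c * r.eval d := by
    rw [Matrix.det_of_isUpperTriangular]
    · rw [Fin.prod_univ_four]
      congr 1
      · congr 1
        · congr 1
          all_goals
            simp [Matrix.mul_apply, Fin.sum_univ_four, newtL, newtN, rowsM, hS, shg, V4.eval]
            try ring
        · simp [Matrix.mul_apply, Fin.sum_univ_four, newtL, newtN, rowsM, hS, shg, V4.eval]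
          ring
      · simp [Matrix.mul_apply, Fin.sum_univ_four, newtL, newtN, rowsM, hS, shg, V4.eval]
        ring
    · intro i j hij
      fin_cases i <;> fin_cases j <;> first
        | (exact absurd hij (by decide))
        | (simp [Matrix.mul_apply, Fin.sum_univ_four, newtL, newtN, rowsM, hS, shg]; ring)
  rw [Matrix.det_mul, Matrix.det_mul, det_newtL, det_newtN, one_mul, mul_one] at key
  exact key

theorem nrm_eq {R : Type*} [CommRing R] [CharP R 2] (r : V4 R) (a b c d p1 p2 p4 : R)
    (h1 : p1 = a + b + c + d) (h2 : p2 = a * b + a * c + a * d + b * c + b * d + c * d)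
    (h3 : a * b * c + a * b * d + a * c * d + b * c * d = 0) (h4 : p4 = a * b * c * d) :
    nrm p1 p2 p4 r = r.eval a * r.eval b * r.eval c * r.eval d := by
  have hS : (sh p1 p2 p4 : V4 R → V4 R) =
      shg (a + b + c + d) (-(a * b + a * c + a * d + b * c + b * d + c * d))
      (a * b * c + a * b * d + a * c * d + b * c * d) (-(a * b * c * d)) := by
    funext r
    rw [h3, CharTwo.neg_eq, CharTwo.neg_eq, h1, h2, h4]
    simp [sh, shg]
  rw [nrm, ← det_rowsM, det_norm r a b c d _ hS]

theorem eval_sh {R : Type*} [CommRing R] (r : V4 R) (p1 p2 p4 w : R)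
    (h : w ^ 4 = p1 * w ^ 3 + p2 * w ^ 2 + p4) :
    (sh p1 p2 p4 r).eval w = w * r.eval w := by
  simp only [sh, V4.eval]
  linear_combination (-r.x3) * h

theorem eval_addc {R : Type*} [CommRing R] (r : V4 R) (g w : R) :
    (addc r g).eval w = r.eval w + g := by
  simp only [addc, V4.eval]
  ring

theorem eval_red {R : Type*} [CommRing R] (p1 p2 p4 k a0 a1 a2 a3 a4 a5 w : R)
    (h : w ^ 4 = p1 * w ^ 3 + p2 * w ^ 2 + p4) :
    (red p1 p2 p4 k (k ^ 2) (k ^ 3) (k ^ 4) (k ^ 5) (k ^ 7) a0 a1 a2 a3 a4 a5).eval w =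
      a0 * w ^ 7 + a1 * k * w ^ 6 + a2 * k ^ 2 * w ^ 5 + a3 * k ^ 3 * w ^ 4
        + a4 * k ^ 4 * w ^ 3 + a5 * k ^ 5 * w ^ 2 + k ^ 7 := by
  simp only [red, eval_addc, eval_sh _ _ _ _ _ h]
  simp only [V4.eval]
  ring

/-! ### The product `∏_{j<k} (1 + τⱼ + τₖ)` as a resultant -/

theorem sq_prod_pairs {R : Type*} [CommRing R] [CharP R 2] (τ : Fin 15 → R) :
    (∏ p ∈ univ.filter (fun p : Fin 15 × Fin 15 => p.1 < p.2), (1 + τ p.1 + τ p.2)) ^ 2 =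
      ∏ j, ∏ k, (1 + τ k + τ j) := by
  have h1 : ∏ j, ∏ k, (1 + τ k + τ j) = ∏ p : Fin 15 × Fin 15, (1 + τ p.1 + τ p.2) := by
    rw [Fintype.prod_prod_type_right]
  have h2 : ∏ p ∈ univ.filter (fun p : Fin 15 × Fin 15 => ¬ p.1 < p.2), (1 + τ p.1 + τ p.2) =
      ∏ p ∈ univ.filter (fun p : Fin 15 × Fin 15 => p.2 < p.1), (1 + τ p.1 + τ p.2) := by
    symm
    apply Finset.prod_subset
    · intro p hp
      simp only [Finset.mem_filter, Finset.mem_univ, true_and] at hp ⊢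
      exact hp.not_gt
    · intro p hp hq
      simp only [Finset.mem_filter, Finset.mem_univ, true_and, not_lt] at hp hq
      rw [le_antisymm hp hq, add_assoc, CharTwo.add_self_eq_zero, add_zero]
  have h3 : ∏ p ∈ univ.filter (fun p : Fin 15 × Fin 15 => p.2 < p.1), (1 + τ p.1 + τ p.2) =
      ∏ p ∈ univ.filter (fun p : Fin 15 × Fin 15 => p.1 < p.2), (1 + τ p.1 + τ p.2) := by
    refine Finset.prod_nbij' Prod.swap Prod.swap ?_ ?_ ?_ ?_ ?_
    · simp
    · simp
    · simp
    · simp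
    · intro p _
      simp only [Prod.fst_swap, Prod.snd_swap]
      ring
  rw [h1, ← Finset.prod_filter_mul_prod_filter_not univ
    (fun p : Fin 15 × Fin 15 => p.1 < p.2), h2, h3, sq]

theorem exists_roots {Ω : Type*} [Field Ω] [IsAlgClosed Ω] [CharP Ω 2] (n : ℕ)
    (p : Polynomial Ω) (hp : p.Monic) (hn : p.natDegree = n) :
    ∃ β : Fin n → Ω, p = ∏ i, (Polynomial.X + Polynomial.C (β i)) := by
  have hs := IsAlgClosed.splits p
  have h := hs.eq_prod_roots
  rw [hp.leadingCoeff, map_one, one_mul] at h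
  have hc := hs.natDegree_eq_card_roots
  obtain ⟨l, hl⟩ : ∃ l : List Ω, p.roots = l := ⟨p.roots.toList, by simp⟩
  rw [hl] at h hc
  have hlen : l.length = n := by rw [← hn, hc]; rfl
  subst hlen
  refine ⟨fun i => l[i], ?_⟩
  have := Fin.prod_univ_fun_getElem l (fun b => Polynomial.X + Polynomial.C b)
  simp only [Fin.getElem_fin]
  rw [Fin.prod_univ_fun_getElem l (fun b => Polynomial.X + Polynomial.C b), h]
  have : ∀ x : Ω, Polynomial.X - Polynomial.C x = Polynomial.X + Polynomial.C x := fun x => by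
    rw [CharTwo.sub_eq_add]
  simp [this]

section forms
variable {α : Type*} [CommRing α] (y : ℕ → α)

/-- Coefficients of `C(u) = c₀ + c₁u + c₂u² + c₄u⁴`. -/
def fc0 : α := 1 + y 4 + y 6 + y 7 + y 8 + y 10 + y 11 + y 12 + y 13 + y 14 + y 15
/-- Coefficient of `u` in `C`. -/
def fc1 : α := y 7 + y 11 + y 13
/-- Coefficient of `u²` in `C`. -/
def fc2 : α := y 6 + y 7 + y 10 + y 11
/-- Coefficient of `u⁴` in `C`. -/
def fc4 : α := y 4 + y 6 + y 7
/-- Coefficient of `u` in `A`. -/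
def fa1 : α := 1 + y 4 + y 6 + y 7 + y 8 + y 10 + y 11 + y 12 + y 13
/-- Coefficient of `u²` in `A`. -/
def fa2 : α := y 7 + y 11
/-- Coefficient of `u³` in `A`. -/
def fa3 : α := 1 + y 4 + y 8
/-- `A(u)`. -/
def fA (u : α) : α :=
  u ^ 7 + y 4 * u ^ 5 + y 7 * u ^ 4 + fa3 y * u ^ 3 + fa2 y * u ^ 2 + fa1 y * u + y 15
/-- `C(u)`. -/
def fC (u : α) : α := fc0 y + fc1 y * u + fc2 y * u ^ 2 + fc4 y * u ^ 4
/-- `f(x)`. -/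
def ff (x : α) : α :=
  x ^ 15 + y 4 * x ^ 11 + y 6 * x ^ 9 + y 7 * x ^ 8 + y 8 * x ^ 7 + y 10 * x ^ 5 + y 11 * x ^ 4
    + y 12 * x ^ 3 + y 13 * x ^ 2 + y 14 * x + y 15

/-- The final determinant. -/
def bigD : α :=
  nrm (fc1 y) (fc0 y * fc2 y) (fc0 y ^ 3 * fc4 y)
    (red (fc1 y) (fc0 y * fc2 y) (fc0 y ^ 3 * fc4 y)
      (fc0 y) (fc0 y ^ 2) (fc0 y ^ 3) (fc0 y ^ 4) (fc0 y ^ 5) (fc0 y ^ 7)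
      (y 15) (fa1 y) (fa2 y) (fa3 y) (y 7) (y 4))

/-- In characteristic two, `f(x) = A(u) + x B(u)` with `B = A + C` and `u = x² + x`. -/
theorem ff_eq [CharP α 2] (x u : α) (h : x ^ 2 = u + x) :
    ff y x = fA y u + x * (fA y u + fC y u) := by
  have h2 : (2 : α) = 0 := CharTwo.two_eq_zero
  have h3 : x ^ 3 = u + x * (u + 1) := by grind
  have h4 : x ^ 4 = u ^ 2 + u + x := by grind
  have h5 : x ^ 5 = u + x * (u ^ 2 + u + 1) := by grind
  have h7 : x ^ 7 = u ^ 3 + u + x * (u ^ 3 + u + 1) := by grind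
  have h8 : x ^ 8 = u ^ 4 + u ^ 2 + u + x := by grind
  have h9 : x ^ 9 = u + x * (u ^ 4 + u ^ 2 + u + 1) := by
    rw [show x ^ 9 = x ^ 8 * x by ring, h8]; grind
  have h11 : x ^ 11 = u ^ 5 + u ^ 3 + u + x * (u ^ 5 + u ^ 4 + u ^ 3 + u + 1) := by
    rw [show x ^ 11 = x ^ 8 * x ^ 3 by ring, h8, h3]; grind
  have h15 : x ^ 15 = u ^ 7 + u ^ 3 + u + x * (u ^ 7 + u ^ 3 + u + 1) := by
    rw [show x ^ 15 = x ^ 8 * x ^ 7 by ring, h8, h7]; grind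
  rw [ff, h15, h11, h9, h8, h7, h5, h4, h3, h]
  simp only [fA, fC, fc0, fc1, fc2, fc4, fa1, fa2, fa3]
  grind
end forms

theorem main_Omega {Ω : Type*} [Field Ω] [IsAlgClosed Ω] [CharP Ω 2] (τ : Fin 15 → Ω)
    (y : ℕ → Ω) (hf : ∀ x, ∏ j, (x + τ j) = ff y x) :
    fc0 y ^ 21 *
      ∏ p ∈ univ.filter (fun p : Fin 15 × Fin 15 => p.1 < p.2), (1 + τ p.1 + τ p.2) =
      bigD y := by
  have two : (2 : Ω) = 0 := CharTwo.two_eq_zero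
  -- the roots of `B`
  obtain ⟨β, hβ⟩ : ∃ β : Fin 7 → Ω, ∀ u, fA y u + fC y u = ∏ i, (u + β i) := by
    obtain ⟨β, h⟩ := exists_roots 7 (Polynomial.X ^ 7 + Polynomial.C (y 4) * Polynomial.X ^ 5
      + Polynomial.C (y 7 + fc4 y) * Polynomial.X ^ 4 + Polynomial.C (fa3 y) * Polynomial.X ^ 3
      + Polynomial.C (fa2 y + fc2 y) * Polynomial.X ^ 2
      + Polynomial.C (fa1 y + fc1 y) * Polynomial.X + Polynomial.C (y 15 + fc0 y))
      (by monicity!) (by compute_degree!)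
    refine ⟨β, fun u => ?_⟩
    have := congrArg (Polynomial.eval u) h
    simp only [Polynomial.eval_prod, Polynomial.eval_add, Polynomial.eval_mul,
      Polynomial.eval_pow, Polynomial.eval_X, Polynomial.eval_C] at this
    rw [← this, fA, fC]
    ring
  -- the quartic
  obtain ⟨w, hw, hw'⟩ : ∃ w : Fin 4 → Ω, (∀ x, x ^ 4 + fc1 y * x ^ 3 + fc0 y * fc2 y * x ^ 2
      + fc0 y ^ 3 * fc4 y = ∏ k, (x + w k)) ∧ Polynomial.X ^ 4
      + Polynomial.C (fc1 y) * Polynomial.X ^ 3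
      + Polynomial.C (fc0 y * fc2 y) * Polynomial.X ^ 2
      + Polynomial.C (fc0 y ^ 3 * fc4 y) = ∏ k, (Polynomial.X + Polynomial.C (w k)) := by
    obtain ⟨w, h⟩ := exists_roots 4 (Polynomial.X ^ 4
      + Polynomial.C (fc1 y) * Polynomial.X ^ 3
      + Polynomial.C (fc0 y * fc2 y) * Polynomial.X ^ 2
      + Polynomial.C (fc0 y ^ 3 * fc4 y)) (by monicity!) (by compute_degree!)
    refine ⟨w, fun x => ?_, h⟩
    have := congrArg (Polynomial.eval x) h
    simp only [Polynomial.eval_prod, Polynomial.eval_add, Polynomial.eval_mul,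
      Polynomial.eval_pow, Polynomial.eval_X, Polynomial.eval_C] at this
    exact this
  have hexp : ∏ k, (Polynomial.X + Polynomial.C (w k)) = Polynomial.X ^ 4
      + Polynomial.C (w 0 + w 1 + w 2 + w 3) * Polynomial.X ^ 3
      + Polynomial.C (w 0 * w 1 + w 0 * w 2 + w 0 * w 3 + w 1 * w 2 + w 1 * w 3 + w 2 * w 3)
        * Polynomial.X ^ 2
      + Polynomial.C (w 0 * w 1 * w 2 + w 0 * w 1 * w 3 + w 0 * w 2 * w 3 + w 1 * w 2 * w 3)
        * Polynomial.X
      + Polynomial.C (w 0 * w 1 * w 2 * w 3) := by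
    simp only [Fin.prod_univ_four, map_add, map_mul]
    ring
  rw [hexp] at hw'
  have hs1 : fc1 y = w 0 + w 1 + w 2 + w 3 := by
    have := congrArg (fun p => Polynomial.coeff p 3) hw'
    simpa [Polynomial.coeff_X, Polynomial.coeff_C, Polynomial.coeff_X_pow, -map_add, -map_mul,
      -map_pow] using this
  have hs2 : fc0 y * fc2 y =
      w 0 * w 1 + w 0 * w 2 + w 0 * w 3 + w 1 * w 2 + w 1 * w 3 + w 2 * w 3 := by
    have := congrArg (fun p => Polynomial.coeff p 2) hw'
    simpa [Polynomial.coeff_X, Polynomial.coeff_C, Polynomial.coeff_X_pow, -map_add, -map_mul,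
      -map_pow] using this
  have hs3 : w 0 * w 1 * w 2 + w 0 * w 1 * w 3 + w 0 * w 2 * w 3 + w 1 * w 2 * w 3 = 0 := by
    have := congrArg (fun p => Polynomial.coeff p 1) hw'
    simpa [Polynomial.coeff_X, Polynomial.coeff_C, Polynomial.coeff_X_pow, -map_add, -map_mul,
      -map_pow, eq_comm] using this
  have hs4 : fc0 y ^ 3 * fc4 y = w 0 * w 1 * w 2 * w 3 := by
    have := congrArg (fun p => Polynomial.coeff p 0) hw'
    simpa [Polynomial.coeff_X, Polynomial.coeff_C, Polynomial.coeff_X_pow, -map_add, -map_mul,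
      -map_pow] using this
  -- the square of the product
  have hP : ∏ p ∈ univ.filter (fun p : Fin 15 × Fin 15 => p.1 < p.2), (1 + τ p.1 + τ p.2) =
      ∏ i, fC y (β i) := by
    apply CharTwo.sq_injective
    show _ ^ 2 = _ ^ 2
    rw [sq_prod_pairs]
    have hu : ∀ x : Ω, x ^ 2 = (x ^ 2 + x) + x := fun x => by
      rw [add_assoc, CharTwo.add_self_eq_zero, add_zero]
    have e1 : ∀ j, ∏ k, (1 + τ k + τ j) = ∏ i, ((τ j ^ 2 + τ j) + β i) := by
      intro j
      have h1 : ∏ k, (1 + τ k + τ j) = ff y (1 + τ j) := by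
        rw [← hf]
        exact Finset.prod_congr rfl fun k _ => by ring
      have h2 : ff y (τ j) = 0 := by
        rw [← hf]
        exact Finset.prod_eq_zero (Finset.mem_univ j) (CharTwo.add_self_eq_zero _)
      rw [ff_eq y (τ j) _ (hu _)] at h2
      rw [h1, ff_eq y (1 + τ j) (τ j ^ 2 + τ j), ← hβ]
      · linear_combination h2
      · ring
    rw [Finset.prod_congr rfl fun j _ => e1 j, Finset.prod_comm, ← Finset.prod_pow]
    refine Finset.prod_congr rfl fun i _ => ?_
    obtain ⟨g, hg⟩ : ∃ g : Fin 2 → Ω, Polynomial.X ^ 2 + Polynomial.X + Polynomial.C (β i) =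
        ∏ k, (Polynomial.X + Polynomial.C (g k)) :=
      exists_roots 2 _ (by monicity!) (by compute_degree!)
    have hg0 := congrArg (Polynomial.eval (g 0)) hg
    simp only [Polynomial.eval_prod, Polynomial.eval_add, Fin.prod_univ_two,
      Polynomial.eval_mul,
      Polynomial.eval_pow, Polynomial.eval_X, Polynomial.eval_C, CharTwo.add_self_eq_zero,
      zero_mul] at hg0
    generalize g 0 = c at hg0
    have hB0 : fA y (β i) + fC y (β i) = 0 := by
      rw [hβ]
      exact Finset.prod_eq_zero (Finset.mem_univ i) (CharTwo.add_self_eq_zero _)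
    have hAC : fA y (β i) = fC y (β i) := CharTwo.add_eq_zero.1 hB0
    have h1 : ff y c = fC y (β i) := by
      rw [ff_eq y c (β i) (by linear_combination hg0 - (c + β i) * two), hB0, hAC]
      ring
    have h2 : ff y (c + 1) = fC y (β i) := by
      rw [ff_eq y (c + 1) (β i) (by linear_combination hg0 - β i * two), hB0, hAC]
      ring
    rw [sq]
    nth_rewrite 1 [← h1]
    rw [← h2, ← hf, ← hf, ← Finset.prod_mul_distrib]
    refine Finset.prod_congr rfl fun j _ => ?_
    linear_combination hg0 - (c ^ 2 + c + c * τ j) * two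
  -- the double product
  have hC : ∀ i, fc0 y ^ 3 * fC y (β i) = ∏ k, (fc0 y + w k * β i) := by
    intro i
    by_cases hb : β i = 0
    · simp [hb, fC]
      ring
    · have : ∏ k, (fc0 y + w k * β i) = ∏ k, (β i * (fc0 y / β i + w k)) :=
        Finset.prod_congr rfl fun k _ => by field_simp
      rw [this, Finset.prod_mul_distrib, ← hw]
      simp only [Finset.prod_const, Finset.card_univ, Fintype.card_fin, fC]
      field_simp
  have hroot : ∀ k, w k ^ 4 = fc1 y * w k ^ 3 + fc0 y * fc2 y * w k ^ 2 + fc0 y ^ 3 * fc4 y := by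
    intro k
    have h := hw (w k)
    rw [Finset.prod_eq_zero (Finset.mem_univ k) (CharTwo.add_self_eq_zero _), add_assoc,
      add_assoc, CharTwo.add_eq_zero] at h
    rw [h, add_assoc]
  have hG : ∀ k, ∏ i, (fc0 y + w k * β i) =
      (red (fc1 y) (fc0 y * fc2 y) (fc0 y ^ 3 * fc4 y)
      (fc0 y) (fc0 y ^ 2) (fc0 y ^ 3) (fc0 y ^ 4) (fc0 y ^ 5) (fc0 y ^ 7)
      (y 15) (fa1 y) (fa2 y) (fa3 y) (y 7) (y 4)).eval (w k) := by
    intro k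
    rw [eval_red _ _ _ _ _ _ _ _ _ _ _ (hroot k)]
    have h1 : ∏ i, (fc0 y + w k * β i) = fc0 y ^ 7 + y 4 * fc0 y ^ 5 * w k ^ 2
        + (y 7 + fc4 y) * fc0 y ^ 4 * w k ^ 3 + fa3 y * fc0 y ^ 3 * w k ^ 4
        + (fa2 y + fc2 y) * fc0 y ^ 2 * w k ^ 5 + (fa1 y + fc1 y) * fc0 y * w k ^ 6
        + (y 15 + fc0 y) * w k ^ 7 := by
      by_cases hb : w k = 0
      · simp [hb]
      · have : ∏ i, (fc0 y + w k * β i) = ∏ i, (w k * (fc0 y / w k + β i)) :=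
          Finset.prod_congr rfl fun i _ => by field_simp
        rw [this, Finset.prod_mul_distrib, ← hβ]
        simp only [Finset.prod_const, Finset.card_univ, Fintype.card_fin, fC, fA]
        field_simp
        ring
    rw [h1]
    linear_combination fc0 y * w k ^ 3 * hroot k + fc0 y * w k ^ 3 *
      (fc1 y * w k ^ 3 + fc0 y * fc2 y * w k ^ 2 + fc0 y ^ 3 * fc4 y) * two
  have h21 : fc0 y ^ 21 * ∏ i, fC y (β i) = ∏ i, (fc0 y ^ 3 * fC y (β i)) := by
    rw [Finset.prod_mul_distrib]
    simp only [Finset.prod_const, Finset.card_univ, Fintype.card_fin]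
    ring
  rw [hP, h21, Finset.prod_congr rfl fun i _ => hC i, Finset.prod_comm,
    Finset.prod_congr rfl fun k _ => hG k, bigD,
    nrm_eq _ (w 0) (w 1) (w 2) (w 3) _ _ _ hs1 hs2 hs3 hs4, Fin.prod_univ_four]

/-! ### Semantics of the truncated arithmetic -/

section ev
variable {Q : Type*} [CommRing Q] (μ : ℕ → ℕ → Q)

/-- Value of a polynomial. -/
def ev (l : Pol) : Q := (List.map (fun x : ℕ × ℕ => μ x.1 x.2) l).sum

theorem ev_nil : ev μ ([] : List (ℕ × ℕ)) = 0 := rfl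

theorem ev_cons (x : ℕ × ℕ) (l : List (ℕ × ℕ)) :
    ev μ (x :: l : List (ℕ × ℕ)) = μ x.1 x.2 + ev μ l := by
  simp [ev]

theorem ev_mergeAux (h2 : (2 : Q) = 0) (x : ℕ × ℕ) (xs : List (ℕ × ℕ))
    (f : List (ℕ × ℕ) → List (ℕ × ℕ)) (hf : ∀ l, ev μ (f l) = ev μ xs + ev μ l) :
    ∀ l, ev μ (mergeAux x xs f l) = μ x.1 x.2 + ev μ xs + ev μ l := by
  intro l
  induction l with
  | nil => simp [mergeAux, ev_cons, ev_nil]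
  | cons y ys ih =>
    rw [mergeAux]
    split
    · rename_i h
      split
      · rename_i h'
        rw [hf, ev_cons, Nat.eq_of_beq_eq_true h, Nat.eq_of_beq_eq_true h']
        linear_combination (-μ y.1 y.2) * h2
      · rw [ev_cons, ev_cons, ev_cons, hf]
        ring
    · split
      · rw [ev_cons, hf, ev_cons]
        ring
      · rw [ev_cons, ih, ev_cons]
        ring

theorem ev_mergeP (h2 : (2 : Q) = 0) (a b : List (ℕ × ℕ)) :
    ev μ (mergeP a b) = ev μ a + ev μ b := by
  induction a generalizing b with
  | nil => simp [mergeP, ev_nil]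
  | cons x xs ih =>
    rw [mergeP, ev_mergeAux μ h2 x xs _ ih, ev_cons]

theorem ev_scaleP (hmul : ∀ a b c d, μ a c * μ b d = μ (a + b) (c * d))
    (hbig : ∀ a c, 32 < a → μ a c = 0) (x : ℕ × ℕ) (b : List (ℕ × ℕ)) :
    ev μ (scaleP x b) = μ x.1 x.2 * ev μ b := by
  induction b with
  | nil => simp [scaleP, ev_nil]
  | cons y ys ih =>
    rw [scaleP]
    split
    · rw [ev_cons, ih, ev_cons, mul_add, hmul]
      rfl
    · rename_i h
      have h' : 32 < x.1 + y.1 := by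
        by_contra hc
        have hb : Nat.ble (Nat.add x.1 y.1) 32 = true :=
          Nat.ble_eq_true_of_le (not_lt.1 hc)
        rw [hb] at h
        exact Bool.noConfusion h
      rw [ev_cons, ih, mul_add, hmul, hbig _ _ h', zero_add]

theorem ev_mulP (h2 : (2 : Q) = 0) (hmul : ∀ a b c d, μ a c * μ b d = μ (a + b) (c * d))
    (hbig : ∀ a c, 32 < a → μ a c = 0) (a b : List (ℕ × ℕ)) :
    ev μ (mulP a b) = ev μ a * ev μ b := by
  induction a with
  | nil => simp [mulP, ev_nil]
  | cons x xs ih =>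
    rw [mulP, ev_mergeP μ h2, ev_scaleP μ hmul hbig, ih, ev_cons, add_mul]

end ev

/-! ### Functoriality of the determinant formula -/

/-- Entrywise map. -/
def V4.map {α β : Type*} (f : α → β) (r : V4 α) : V4 β := ⟨f r.x0, f r.x1, f r.x2, f r.x3⟩

section functoriality
variable {α β : Type*} [Add α] [Mul α] [Add β] [Mul β] (f : α → β)

theorem map_sh (ha : ∀ a b, f (a + b) = f a + f b) (hm : ∀ a b, f (a * b) = f a * f b)
    (p1 p2 p4 : α) (r : V4 α) :
    (sh p1 p2 p4 r).map f = sh (f p1) (f p2) (f p4) (r.map f) := by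
  simp only [sh, V4.map, ha, hm]

theorem map_addc (ha : ∀ a b, f (a + b) = f a + f b) (r : V4 α) (g : α) :
    (addc r g).map f = addc (r.map f) (f g) := by
  simp only [addc, V4.map, ha]

theorem map_det4 (ha : ∀ a b, f (a + b) = f a + f b) (hm : ∀ a b, f (a * b) = f a * f b)
    (r s t u : V4 α) : f (det4 r s t u) = det4 (r.map f) (s.map f) (t.map f) (u.map f) := by
  simp only [det4, V4.map, ha, hm]

theorem map_nrm (ha : ∀ a b, f (a + b) = f a + f b) (hm : ∀ a b, f (a * b) = f a * f b)
    (p1 p2 p4 : α) (r : V4 α) :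
    f (nrm p1 p2 p4 r) = nrm (f p1) (f p2) (f p4) (r.map f) := by
  simp only [nrm, map_det4 f ha hm, map_sh f ha hm]

theorem map_red (ha : ∀ a b, f (a + b) = f a + f b) (hm : ∀ a b, f (a * b) = f a * f b)
    (p1 p2 p4 k1 k2 k3 k4 k5 k7 a0 a1 a2 a3 a4 a5 : α) :
    (red p1 p2 p4 k1 k2 k3 k4 k5 k7 a0 a1 a2 a3 a4 a5).map f =
      red (f p1) (f p2) (f p4) (f k1) (f k2) (f k3) (f k4) (f k5) (f k7)
        (f a0) (f a1) (f a2) (f a3) (f a4) (f a5) := by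
  simp only [red, map_addc f ha, map_sh f ha hm, hm]
  simp only [V4.map, hm]

end functoriality

theorem map_fc0 {α β : Type*} [CommRing α] [CommRing β] (f : α →+* β) (y : ℕ → α) :
    f (fc0 y) = fc0 (fun i => f (y i)) := by
  simp only [fc0, map_add, map_one]

theorem map_bigD {α β : Type*} [CommRing α] [CommRing β] (f : α →+* β) (y : ℕ → α) :
    f (bigD y) = bigD (fun i => f (y i)) := by
  rw [bigD, map_nrm f (map_add f) (map_mul f), map_red f (map_add f) (map_mul f)]
  simp only [bigD, fc0, fc1, fc2, fc4, fa1, fa2, fa3, map_add, map_one, map_mul, map_pow]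

theorem nrm_Pol :
    nrm Lc1 Lp2 Lp4 (red Lc1 Lp2 Lp4 Lc0 Lc02 Lc03 Lc04 Lc05 Lc07 La0 La1 La2 La3 La4 La5)
      = LD := by
  rw [red, chk11, chk12, chk13, chk14, chk15, nrm, chk16, chk17, chk18, det4, chk19, chk20,
    chk21, chk22, chk23, chk24, chk25, chk26, chk27, chk28, chk29, chk30, chk31]

theorem reflect {Q : Type*} [CommRing Q] (μ : ℕ → ℕ → Q) (h2 : (2 : Q) = 0)
    (hmul : ∀ a b c d, μ a c * μ b d = μ (a + b) (c * d))
    (hbig : ∀ a c, 32 < a → μ a c = 0) (hone : μ 0 1 = 1) (y : ℕ → Q)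
    (h4 : y 4 = μ 4 29) (h6 : y 6 = μ 6 23) (h7 : y 7 = μ 7 19) (h8 : y 8 = μ 8 17)
    (h10 : y 10 = μ 10 13) (h11 : y 11 = μ 11 11) (h12 : y 12 = μ 12 7) (h13 : y 13 = μ 13 5)
    (h14 : y 14 = μ 14 3) (h15 : y 15 = μ 15 2)
    (hR : y 4 * y 13 + y 6 * y 11 + y 7 * y 10 = 0) (p : Q) (hp : fc0 y ^ 21 * p = bigD y) :
    p = ev μ Llow +
      (y 4 * y 14 ^ 2 + y 6 * y 13 ^ 2 + y 8 * y 12 ^ 2 + y 10 ^ 2 * y 12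
        + y 10 * y 11 ^ 2 + y 4 ^ 2 * y 11 * y 13 + y 6 ^ 2 * y 7 * y 13
        + y 6 ^ 2 * y 10 ^ 2 + y 7 ^ 3 * y 11 + y 8 ^ 4 + y 4 ^ 8) := by
  have ha : ∀ a b : Pol, ev μ (a + b) = ev μ a + ev μ b := fun a b => ev_mergeP μ h2 a b
  have hm : ∀ a b : Pol, ev μ (a * b) = ev μ a * ev μ b := fun a b => ev_mulP μ h2 hmul hbig a b
  have g4 : ev μ Ly4 = y 4 := by simp [h4, Ly4, ev]
  have g6 : ev μ Ly6 = y 6 := by simp [h6, Ly6, ev]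
  have g7 : ev μ Ly7 = y 7 := by simp [h7, Ly7, ev]
  have g8 : ev μ Ly8 = y 8 := by simp [h8, Ly8, ev]
  have g10 : ev μ Ly10 = y 10 := by simp [h10, Ly10, ev]
  have g11 : ev μ Ly11 = y 11 := by simp [h11, Ly11, ev]
  have g12 : ev μ Ly12 = y 12 := by simp [h12, Ly12, ev]
  have g13 : ev μ Ly13 = y 13 := by simp [h13, Ly13, ev]
  have g14 : ev μ Ly14 = y 14 := by simp [h14, Ly14, ev]
  have k0 : ev μ Lc0 = fc0 y := by
    simp only [Lc0, ev, fc0, List.map_cons, List.map_nil, List.sum_cons, List.sum_nil, hone,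
      h4, h6, h7, h8, h10, h11, h12, h13, h14, h15]
    ring
  have k1 : ev μ Lc1 = fc1 y := by
    simp only [Lc1, ev, fc1, List.map_cons, List.map_nil, List.sum_cons, List.sum_nil,
      h7, h11, h13]
    ring
  have k2 : ev μ Lc2 = fc2 y := by
    simp only [Lc2, ev, fc2, List.map_cons, List.map_nil, List.sum_cons, List.sum_nil,
      h6, h7, h10, h11]
    ring
  have k4 : ev μ Lc4 = fc4 y := by
    simp only [Lc4, ev, fc4, List.map_cons, List.map_nil, List.sum_cons, List.sum_nil,
      h4, h6, h7]
    ring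
  have l0 : ev μ La0 = y 15 := by simp [h15, La0, ev]
  have l1 : ev μ La1 = fa1 y := by
    simp only [La1, ev, fa1, List.map_cons, List.map_nil, List.sum_cons, List.sum_nil, hone,
      h4, h6, h7, h8, h10, h11, h12, h13]
    ring
  have l2 : ev μ La2 = fa2 y := by
    simp only [La2, ev, fa2, List.map_cons, List.map_nil, List.sum_cons, List.sum_nil,
      h7, h11]
    ring
  have l3 : ev μ La3 = fa3 y := by
    simp only [La3, ev, fa3, List.map_cons, List.map_nil, List.sum_cons, List.sum_nil, hone,
      h4, h8]
    ring
  have l4 : ev μ La4 = y 7 := by simp [h7, La4, ev]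
  have l5 : ev μ La5 = y 4 := by simp [h4, La5, ev]
  have q2 : ev μ Lc02 = fc0 y ^ 2 := by rw [← chk1, hm, k0]; ring
  have q3 : ev μ Lc03 = fc0 y ^ 3 := by rw [← chk2, hm, k0, q2]; ring
  have q4 : ev μ Lc04 = fc0 y ^ 4 := by rw [← chk3, hm, q2]; ring
  have q5 : ev μ Lc05 = fc0 y ^ 5 := by rw [← chk4, hm, q4, k0]; ring
  have q7 : ev μ Lc07 = fc0 y ^ 7 := by rw [← chk5, hm, q5, q2]; ring
  have q8 : ev μ Lc08 = fc0 y ^ 8 := by rw [← chk6, hm, q4]; ring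
  have q11 : ev μ Lc011 = fc0 y ^ 11 := by rw [← chk7, hm, q8, q3]; ring
  have r2 : ev μ Lp2 = fc0 y * fc2 y := by rw [← chk8, hm, k0, k2]
  have r4 : ev μ Lp4 = fc0 y ^ 3 * fc4 y := by rw [← chk9, hm, q3, k4]
  have q16 : fc0 y ^ 16 = 1 := by
    have : ev μ (Lc08 * Lc08) = 1 := by
      rw [chk10]
      simp [ev, hone]
    rw [← this, hm, q8]
    ring
  have hD : ev μ LD = bigD y := by
    rw [← nrm_Pol, map_nrm _ ha hm, map_red _ ha hm, bigD]
    simp only [k0, k1, l0, l1, l2, l3, l4, l5, q2, q3, q4, q5, q7, r2, r4]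
  have e1 : p = ev μ (LD * Lc011) := by
    rw [hm, hD, q11, ← hp]
    have : fc0 y ^ 21 * p * fc0 y ^ 11 = (fc0 y ^ 16) ^ 2 * p := by ring
    rw [this, q16]
    ring
  rw [e1, chk32]
  simp only [Ltgt, ha, hm, g4, g6, g7, g8, g10, g11, g12, g13, g14]
  linear_combination (y 7 * y 8 + y 4 * y 11) * hR

/-! ### Descent to the ring of elementary symmetric polynomials -/

theorem P_symm : P.IsSymmetric := by
  intro σ
  apply CharTwo.sq_injective
  show (rename σ P) ^ 2 = P ^ 2
  rw [← map_pow, P, sq_prod_pairs]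
  simp only [map_prod, map_add, map_one, rename_X]
  rw [Equiv.prod_comp σ (fun j => ∏ k, (1 + X (σ k) + X j : MvPolynomial (Fin 15) (ZMod 2)))]
  exact Finset.prod_congr rfl fun j _ =>
    Equiv.prod_comp σ (fun k => (1 + X k + X j : MvPolynomial (Fin 15) (ZMod 2)))

/-- `P` as a polynomial in the elementary symmetric polynomials. -/
theorem exists_p : ∃ p : MvPolynomial (Fin 15) (ZMod 2),
    P = aeval (fun i : Fin 15 => e (i + 1)) p := by
  obtain ⟨p, hp⟩ := (esymmAlgEquiv (Fin 15) (ZMod 2) (n := 15) (by simp)).surjective ⟨P, P_symm⟩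
  refine ⟨p, ?_⟩
  rw [esymmAlgEquiv_apply] at hp
  have := congrArg Subtype.val hp
  rw [esymmAlgHom_apply] at this
  exact this.symm

/-- The generic coefficients, with those of index 1, 2, 3, 5, 9 put to zero. -/
noncomputable def gy (i : ℕ) : MvPolynomial ℕ (ZMod 2) :=
  if i = 1 ∨ i = 2 ∨ i = 3 ∨ i = 5 ∨ i = 9 then 0 else X i

theorem generic_identity (p : MvPolynomial (Fin 15) (ZMod 2))
    (hp : P = aeval (fun i : Fin 15 => e (i + 1)) p) :
    fc0 gy ^ 21 * aeval (fun i : Fin 15 => gy (i + 1)) p = bigD gy := by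
  let F := FractionRing (MvPolynomial ℕ (ZMod 2))
  let Ω := AlgebraicClosure F
  let ι : MvPolynomial ℕ (ZMod 2) →+* Ω := (algebraMap F Ω).comp (algebraMap _ F)
  have hι : Function.Injective ι :=
    (algebraMap F Ω).injective.comp (IsFractionRing.injective _ F)
  haveI : CharP Ω 2 := charP_of_injective_ringHom hι 2
  letI : Algebra (ZMod 2) Ω := ZMod.algebra Ω 2
  apply hι
  rw [map_mul, map_pow, map_fc0, map_bigD]
  set y : ℕ → Ω := fun i => ι (gy i) with hy
  obtain ⟨τ, hτ⟩ := exists_roots 15 (Polynomial.X ^ 15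
    + Polynomial.C (y 4) * Polynomial.X ^ 11 + Polynomial.C (y 6) * Polynomial.X ^ 9
    + Polynomial.C (y 7) * Polynomial.X ^ 8 + Polynomial.C (y 8) * Polynomial.X ^ 7
    + Polynomial.C (y 10) * Polynomial.X ^ 5 + Polynomial.C (y 11) * Polynomial.X ^ 4
    + Polynomial.C (y 12) * Polynomial.X ^ 3 + Polynomial.C (y 13) * Polynomial.X ^ 2
    + Polynomial.C (y 14) * Polynomial.X + Polynomial.C (y 15) : Polynomial Ω)
    (by monicity!) (by compute_degree!)
  have hf : ∀ x, ∏ j, (x + τ j) = ff y x := by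
    intro x
    have := congrArg (Polynomial.eval x) hτ
    simp only [Polynomial.eval_prod, Polynomial.eval_add, Polynomial.eval_mul,
      Polynomial.eval_pow, Polynomial.eval_X, Polynomial.eval_C] at this
    rw [← this, ff]
  rw [← main_Omega τ y hf]
  congr 1
  have hz1 : y 1 = 0 := by simp [hy, gy]
  have hz2 : y 2 = 0 := by simp [hy, gy]
  have hz3 : y 3 = 0 := by simp [hy, gy]
  have hz5 : y 5 = 0 := by simp [hy, gy]
  have hz9 : y 9 = 0 := by simp [hy, gy]
  have hes : ∀ i : Fin 15, aeval τ (e (i + 1)) = y (i + 1) := by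
    intro i
    rw [e, aeval_esymm_eq_multiset_esymm]
    have h := Multiset.prod_X_add_C_coeff (Multiset.map τ Finset.univ.val) (k := 14 - i)
      (by simp; omega)
    rw [Multiset.map_map] at h
    have h' : (Multiset.map ((fun r => Polynomial.X + Polynomial.C r) ∘ τ)
      (Finset.univ : Finset (Fin 15)).val).prod = ∏ j, (Polynomial.X + Polynomial.C (τ j)) := rfl
    rw [h', ← hτ] at h
    have h'' : Multiset.card (Multiset.map τ (Finset.univ : Finset (Fin 15)).val) - (14 - (i : ℕ))
        = i + 1 := by
      simp only [Multiset.card_map, Finset.card_val, Finset.card_univ, Fintype.card_fin]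
      omega
    rw [h''] at h
    rw [← h]
    fin_cases i <;>
      simp [Polynomial.coeff_X, Polynomial.coeff_C, Polynomial.coeff_X_pow, hz1, hz2, hz3, hz5,
        hz9]
  have h1 : aeval τ P = ∏ p ∈ univ.filter (fun p : Fin 15 × Fin 15 => p.1 < p.2),
      (1 + τ p.1 + τ p.2) := by
    rw [P]
    simp only [map_prod, map_add, map_one, aeval_X]
  rw [← h1, hp]
  have hcomm : ∀ r, ι (algebraMap (ZMod 2) (MvPolynomial ℕ (ZMod 2)) r) =
      algebraMap (ZMod 2) Ω r := by
    intro r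
    have : (ι.comp (algebraMap (ZMod 2) (MvPolynomial ℕ (ZMod 2)))) =
      algebraMap (ZMod 2) Ω := Subsingleton.elim _ _
    exact congrArg (fun f => f r) this
  let ι' : MvPolynomial ℕ (ZMod 2) →ₐ[ZMod 2] Ω :=
    { ι with commutes' := hcomm }
  have h2 : ι (aeval (fun i : Fin 15 => gy (i + 1)) p) =
      aeval (fun i : Fin 15 => y (i + 1)) p := by
    change ι' _ = _
    rw [← AlgHom.comp_apply, comp_aeval]
    rfl
  rw [h2, ← AlgHom.comp_apply, comp_aeval]
  simp only [hes]

/-! ### Grading -/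

section grading
variable {R : Type*} [CommRing R] [Algebra (ZMod 2) R]
  (m : MvPolynomial (Fin 15) (ZMod 2) →ₐ[ZMod 2] R)

/-- The grading homomorphism `t_j ↦ s t_j`, followed by `m`. -/
noncomputable def gradeHom : MvPolynomial (Fin 15) (ZMod 2) →ₐ[ZMod 2]
    Polynomial R :=
  aeval (fun j => Polynomial.monomial 1 (m (X j)))

theorem coeff_gradeHom (q : MvPolynomial (Fin 15) (ZMod 2)) (n : ℕ) :
    (gradeHom m q).coeff n = m (homogeneousComponent n q) := by
  induction q using MvPolynomial.induction_on' with
  | monomial d c =>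
    have h1 : gradeHom m (monomial d c) =
        Polynomial.monomial d.degree (m (monomial d c)) := by
      rw [gradeHom, aeval_monomial]
      have h2 : (d.prod fun i k => (Polynomial.monomial 1 (m (X i))) ^ k) =
          Polynomial.monomial d.degree (m (monomial d 1)) := by
        rw [monomial_eq, Finsupp.prod, Finsupp.prod, Finsupp.degree_apply, map_one, one_mul, map_prod]
        simp only [Polynomial.monomial_pow, one_mul, map_pow]
        induction d.support using Finset.induction_on with
        | empty => simp
        | insert a s ha ih =>
          rw [Finset.prod_insert ha, Finset.prod_insert ha, Finset.sum_insert ha, ih,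
            Polynomial.monomial_mul_monomial]
      have h3 : (monomial d c : MvPolynomial (Fin 15) (ZMod 2)) = c • monomial d 1 := by
        simp [smul_monomial]
      rw [h2, h3, ← Algebra.smul_def, Polynomial.smul_monomial, map_smul m]
    rw [h1, Polynomial.coeff_monomial,
      homogeneousComponent_of_mem (isHomogeneous_monomial (n := d.degree) c rfl)]
    by_cases h : d.degree = n
    · simp [h]
    · simp [h, Ne.symm h]
  | add p q hp hq => rw [map_add, Polynomial.coeff_add, hp, hq, map_add, map_add]

theorem e_homogeneous (i : ℕ) : (e i).IsHomogeneous i := by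
  rw [e, esymm]
  apply IsHomogeneous.sum
  intro t ht
  have := IsHomogeneous.prod t (fun j : Fin 15 => (X j : MvPolynomial (Fin 15) (ZMod 2)))
    (fun _ => 1) (fun j _ => isHomogeneous_X _ j)
  simpa [(Finset.mem_powersetCard.1 ht).2] using this

theorem gradeHom_e (i : ℕ) :
    gradeHom m (e i) = Polynomial.monomial i (m (e i)) := by
  ext n
  rw [coeff_gradeHom, Polynomial.coeff_monomial, homogeneousComponent_of_mem (e_homogeneous i)]
  by_cases h : i = n
  · simp [h]
  · simp [h, Ne.symm h]

end grading

/-- The multiplicative function on codes. -/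
noncomputable def codeVal {R : Type*} [CommRing R] (v : ℕ → R) (n : ℕ) : R :=
  if n = 0 then 0 else (n.primeFactorsList.map v).prod

theorem codeVal_mul {R : Type*} [CommRing R] (v : ℕ → R) (a b : ℕ) :
    codeVal v a * codeVal v b = codeVal v (a * b) := by
  rcases eq_or_ne a 0 with rfl | ha
  · simp [codeVal]
  rcases eq_or_ne b 0 with rfl | hb
  · simp [codeVal]
  rw [codeVal, codeVal, codeVal, if_neg ha, if_neg hb, if_neg (mul_ne_zero ha hb),
    ((Nat.perm_primeFactorsList_mul ha hb).map v).prod_eq, List.map_append, List.prod_append]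

theorem codeVal_prime {R : Type*} [CommRing R] (v : ℕ → R) (q : ℕ) (hq : q.Prime) :
    codeVal v q = v q := by
  rw [codeVal, if_neg hq.ne_zero, Nat.primeFactorsList_prime hq]
  simp

/-- Index of the variable of a prime. -/
def idx : ℕ → ℕ
  | 2 => 15
  | 3 => 14
  | 5 => 13
  | 7 => 12
  | 11 => 11
  | 13 => 10
  | 17 => 8
  | 19 => 7
  | 23 => 6
  | 29 => 4
  | _ => 0

theorem low_weights : (List.all Llow fun x => Nat.blt x.1 32) = true := by decide +kernel

/-- The right-hand side of the theorem. -/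
noncomputable def tgt {α : Type*} [CommRing α] (y : ℕ → α) : α :=
  y 4 * y 14 ^ 2 + y 6 * y 13 ^ 2 + y 8 * y 12 ^ 2 + y 10 ^ 2 * y 12
    + y 10 * y 11 ^ 2 + y 4 ^ 2 * y 11 * y 13 + y 6 ^ 2 * y 7 * y 13
    + y 6 ^ 2 * y 10 ^ 2 + y 7 ^ 3 * y 11 + y 8 ^ 4 + y 4 ^ 8

theorem tgt_homogeneous : (tgt e).IsHomogeneous 32 := by
  have h := e_homogeneous
  refine IsHomogeneous.add (IsHomogeneous.add (IsHomogeneous.add (IsHomogeneous.add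
    (IsHomogeneous.add (IsHomogeneous.add (IsHomogeneous.add (IsHomogeneous.add
    (IsHomogeneous.add (IsHomogeneous.add ?_ ?_) ?_) ?_) ?_) ?_) ?_) ?_) ?_) ?_) ?_
  · exact (h 4).mul ((h 14).pow 2)
  · exact (h 6).mul ((h 13).pow 2)
  · exact (h 8).mul ((h 12).pow 2)
  · exact ((h 10).pow 2).mul (h 12)
  · exact (h 10).mul ((h 11).pow 2)
  · exact (((h 4).pow 2).mul (h 11)).mul (h 13)
  · exact (((h 6).pow 2).mul (h 7)).mul (h 13)
  · exact ((h 6).pow 2).mul ((h 10).pow 2)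
  · exact ((h 7).pow 3).mul (h 11)
  · exact (h 8).pow 4
  · exact (h 4).pow 8

theorem main_quot {R : Type*} [CommRing R] [Algebra (ZMod 2) R]
    (m : MvPolynomial (Fin 15) (ZMod 2) →ₐ[ZMod 2] R) (h1 : m (e 1) = 0) (h2 : m (e 2) = 0)
    (h3 : m (e 3) = 0) (h5 : m (e 5) = 0) (h9 : m (e 9) = 0)
    (hR : m (e 4 * e 13 + e 6 * e 11 + e 7 * e 10) = 0) :
    m (homogeneousComponent 32 P - tgt e) = 0 := by
  let J : Ideal (Polynomial R) := Ideal.span {Polynomial.X ^ 33}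
  let π : Polynomial R →+* Polynomial R ⧸ J := Ideal.Quotient.mk J
  let φ : MvPolynomial (Fin 15) (ZMod 2) →+* Polynomial R ⧸ J :=
    π.comp (gradeHom m : MvPolynomial (Fin 15) (ZMod 2) →+* Polynomial R)
  letI : Algebra (ZMod 2) (Polynomial R ⧸ J) := (φ.comp (algebraMap (ZMod 2) _)).toAlgebra
  let φ' : MvPolynomial (Fin 15) (ZMod 2) →ₐ[ZMod 2] Polynomial R ⧸ J :=
    { φ with commutes' := fun r => rfl }
  let v : ℕ → R := fun q => m (e (idx q))
  let μ : ℕ → ℕ → Polynomial R ⧸ J := fun w c => π (Polynomial.monomial w (codeVal v c))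
  have hφe : ∀ i, φ (e i) = π (Polynomial.monomial i (m (e i))) := by
    intro i
    rw [← gradeHom_e]
    rfl
  have hz : ∀ i, m (e i) = 0 → φ (e i) = 0 := by
    intro i hi
    rw [hφe, hi, map_zero, map_zero]
  have hμ : ∀ q, q.Prime → μ (idx q) q = φ (e (idx q)) := by
    intro q hq
    rw [hφe]
    simp only [μ, codeVal_prime v q hq, v]
  obtain ⟨p, hp⟩ := exists_p
  let ψ : MvPolynomial ℕ (ZMod 2) →ₐ[ZMod 2] Polynomial R ⧸ J := aeval (fun i => φ (e i))
  have hψ : ∀ i, ψ (gy i) = φ (e i) := by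
    intro i
    rw [gy]
    split_ifs with h
    · rw [map_zero]
      rcases h with rfl | rfl | rfl | rfl | rfl
      · exact (hz _ h1).symm
      · exact (hz _ h2).symm
      · exact (hz _ h3).symm
      · exact (hz _ h5).symm
      · exact (hz _ h9).symm
    · simp only [ψ, aeval_X]
  have hid := congrArg (ψ : MvPolynomial ℕ (ZMod 2) →+* Polynomial R ⧸ J)
    (generic_identity p hp)
  rw [map_mul, map_pow, map_fc0, map_bigD] at hid
  have hy : (fun i => (ψ : MvPolynomial ℕ (ZMod 2) →+* Polynomial R ⧸ J) (gy i)) =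
      fun i => φ (e i) := funext hψ
  have hP : (ψ : MvPolynomial ℕ (ZMod 2) →+* Polynomial R ⧸ J)
      (aeval (fun i : Fin 15 => gy (i + 1)) p) = φ P := by
    change ψ _ = φ' P
    rw [hp, ← AlgHom.comp_apply, ← AlgHom.comp_apply, comp_aeval, comp_aeval]
    congr 2
    funext i
    exact hψ _
  rw [hy, hP] at hid
  have two : (2 : Polynomial R ⧸ J) = 0 := by
    have : φ (1 + 1) = 0 := by
      rw [CharTwo.add_self_eq_zero, map_zero]
    rw [map_add, map_one, one_add_one_eq_two] at this
    exact this
  have key := reflect μ two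
    (by
      intro a b c d
      simp only [μ]
      rw [← map_mul, Polynomial.monomial_mul_monomial, codeVal_mul])
    (by
      intro a c h
      simp only [μ]
      apply Ideal.Quotient.eq_zero_iff_mem.2
      rw [Ideal.mem_span_singleton, Polynomial.X_pow_dvd_iff]
      intro d hd
      rw [Polynomial.coeff_monomial, if_neg (by omega)])
    (by simp [μ, codeVal])
    (fun i => φ (e i))
    (hμ 29 (by norm_num)).symm (hμ 23 (by norm_num)).symm (hμ 19 (by norm_num)).symm
    (hμ 17 (by norm_num)).symm (hμ 13 (by norm_num)).symm (hμ 11 (by norm_num)).symm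
    (hμ 7 (by norm_num)).symm (hμ 5 (by norm_num)).symm (hμ 3 (by norm_num)).symm
    (hμ 2 (by norm_num)).symm
    (by
      simp only [← map_mul, ← map_add]
      have : gradeHom m (e 4 * e 13 + e 6 * e 11 + e 7 * e 10) = 0 := by
        simp only [map_add, map_mul, gradeHom_e, Polynomial.monomial_mul_monomial]
        simp only [← map_add, ← map_mul]
        rw [hR, map_zero]
      change π (gradeHom m _) = 0
      rw [this, map_zero])
    (φ P) hid
  have ht : φ (P - tgt e) = ev μ Llow := by
    rw [map_sub, key]
    simp only [tgt, map_add, map_mul, map_pow]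
    ring
  -- lift to polynomials
  have hev : ∀ l : List (ℕ × ℕ), (List.all l fun x => Nat.blt x.1 32) = true →
      ∃ g : Polynomial R, ev μ l = π g ∧ g.coeff 32 = 0 := by
    intro l
    induction l with
    | nil => exact fun _ => ⟨0, by simp [ev_nil], by simp⟩
    | cons x xs ih =>
      intro hl
      rw [List.all_cons, Bool.and_eq_true] at hl
      obtain ⟨g, hg, hg'⟩ := ih hl.2
      refine ⟨Polynomial.monomial x.1 (codeVal v x.2) + g, ?_, ?_⟩
      · rw [ev_cons, hg, map_add]
      · have : x.1 < 32 := by simpa using hl.1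
        rw [Polynomial.coeff_add, hg', Polynomial.coeff_monomial, if_neg (by omega), add_zero]
  obtain ⟨g, hg, hg'⟩ := hev Llow low_weights
  rw [hg] at ht
  have ht' : gradeHom m (P - tgt e) - g ∈ J := (Ideal.Quotient.eq).1 ht
  rw [Ideal.mem_span_singleton, Polynomial.X_pow_dvd_iff] at ht'
  have h32 := ht' 32 (by norm_num)
  rw [Polynomial.coeff_sub, hg', sub_zero, coeff_gradeHom,
    map_sub, homogeneousComponent_of_mem tgt_homogeneous, if_pos rfl] at h32
  exact h32

/-- the degree-32 homogeneous component `P₃₂` of `P` is congruent to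
`e₄e₁₄² + e₆e₁₃² + e₈e₁₂² + e₁₀²e₁₂ + e₁₀e₁₁² + e₄²e₁₁e₁₃ + e₆²e₇e₁₃ + e₆²e₁₀²
 + e₇³e₁₁ + e₈⁴ + e₄⁸` modulo the ideal generated by `e₁, e₂, e₃, e₅, e₉` and
`e₄e₁₃ + e₆e₁₁ + e₇e₁₀`. -/
theorem lambda2_spin15_w32 :
    homogeneousComponent 32 P -
      (e 4 * e 14 ^ 2 + e 6 * e 13 ^ 2 + e 8 * e 12 ^ 2 + e 10 ^ 2 * e 12
        + e 10 * e 11 ^ 2 + e 4 ^ 2 * e 11 * e 13 + e 6 ^ 2 * e 7 * e 13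
        + e 6 ^ 2 * e 10 ^ 2 + e 7 ^ 3 * e 11 + e 8 ^ 4 + e 4 ^ 8)
      ∈ Ideal.span {e 1, e 2, e 3, e 5, e 9, e 4 * e 13 + e 6 * e 11 + e 7 * e 10} := by
  refine Ideal.Quotient.eq_zero_iff_mem.1 (main_quot (Ideal.Quotient.mkₐ (ZMod 2) _)
    ?_ ?_ ?_ ?_ ?_ ?_) <;>
  exact Ideal.Quotient.eq_zero_iff_mem.2 (Ideal.subset_span (by simp))
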